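/- For the family C_m of lifted extended quadratic residue codes of length 24 modulo 2^m, let A_{2,1} := 2^{−12}·swe_{C_3}(x_0, x_1, z−y_0, z+y_0) ∈ ℚ[x_0,x_1,y_0,z]. Then the sum of those monomials of A_{2,1} that are divisible by x_0·y_0 equals D_{2,1} = 12144·x_0^8·y_0^8·(−x_1^2·z^6 + 2·x_1^4·z^4 − x_1^6·z^2). -/

import Mathlib

/-!
Put `y₀`, `z` for the last two variables after the substitution. Expanding every factor
`z ± y₀` writes the substituted enumerator as a sum, over codewords `c` and subsets `T` of the
coordinates (the places where `± y₀` is chosen), of monomials `term c T`; here `T` contributes only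
if all coordinates of `c` on `T` are `0` or `4`, with sign `-1` for each `4` (`aeval_swe`). For
fixed `T` let `charSum T` be the sum over the code. Adding `4 d` to `c`, where `d` is a codeword,
multiplies `term c T` by `(-1) ^ ⟨T, d⟩`, so `charSum T` vanishes unless `T` is orthogonal to the
code modulo `2` (`charSum_eq_zero`), that is, unless `T` lies in the extended Golay code, whose
weights are `0`, `8`, `12`, `16`, `24` (`golay_weight`).

A monomial divisible by `x₀ y₀` requires `T ≠ 0` and a codeword whose reduction modulo `2` is a
nonzero Golay word disjoint from `T`. This excludes the weight `24`. For a dodecad `T` the odd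
coordinates form the complementary dodecad, and the codeword would have norm `12`, whereas the code
is self-orthogonal modulo `8` (`divPart_charSum_dodecad`). For the complement of an octad, the inner
product with a suitable codeword yields a contradiction in the same way
(`divPart_charSum_compl_base`). For an octad the contribution is `2 ^ 12 • octadPoly`, which is a
sum over the `4 ^ 5` messages modulo `4` that vanish on the octad (`good_base`). The last two facts
are only verified for one base octad: the code has the monomial automorphisms `j ↦ j - 1` and
`j ↦ -1/j` of the projective line over `𝔽₂₃`, which permute the `759` octads transitively
(`good_octad`, `octad_count`). Finally `759 * 16 = 12144`.

It remains to identify the code (`code_eq_words`). Modulo `2` there are two possible factors, their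
Hensel lifts modulo `8` are explicit, and unique by a Bézout identity (`lift_unique`). Each of the
two lifts yields the code spanned by the matrix `gen`, the second one after the reflection
`j ↦ 11 - j` of the coordinates.
-/

open MvPolynomial
open scoped Classical

noncomputable section

/-- The symmetrized weight enumerator of a code `C ⊆ (ℤ/Nℤ)^n` (for `N = p^m`):
the variable `X i` for `i < m` records the number of coordinates of `p`-adic valuation `i`,
and the last variable `X m` (the variable `z`) records the number of zero coordinates. -/
def swe (p m : ℕ) {N n : ℕ} [NeZero N]
    (C : Submodule (ZMod N) (Fin n → ZMod N)) : MvPolynomial (Fin (m + 1)) ℚ :=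
  ∑ c : Fin n → ZMod N, if c ∈ C then
      (∏ i : Fin m, (X (Fin.castSucc i) : MvPolynomial (Fin (m + 1)) ℚ) ^
          (Finset.univ.filter fun j => c j ≠ 0 ∧ padicValNat p (c j).val = (i : ℕ)).card)
        * (X (Fin.last m) : MvPolynomial (Fin (m + 1)) ℚ) ^
            (Finset.univ.filter fun j => c j = 0).card
    else 0

/-- `g` is a monic irreducible degree-11 factor of `x^23 - 1` over `ℤ/pℤ`. -/
def IsQRFactor (p : ℕ) (g : Polynomial (ZMod p)) : Prop :=
  g.Monic ∧ g.natDegree = 11 ∧ Irreducible g ∧ g ∣ (Polynomial.X ^ 23 - 1)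

/-- `gm` is the (Hensel) lift of `g` to `ℤ/Nℤ` and `C` is the associated lifted extended
cyclic quadratic residue code of length 24: the extension by an overall parity check of the
cyclic code of length 23 generated by `gm`. -/
def IsLiftedQR {p N : ℕ} (hpN : p ∣ N) (g : Polynomial (ZMod p)) (gm : Polynomial (ZMod N))
    (C : Submodule (ZMod N) (Fin 24 → ZMod N)) : Prop :=
  gm.Monic ∧ gm.natDegree = 11 ∧ gm ∣ (Polynomial.X ^ 23 - 1) ∧
    gm.map (ZMod.castHom hpN (ZMod p)) = g ∧
    ∀ c : Fin 24 → ZMod N, c ∈ C ↔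
      ((∃ f : Polynomial (ZMod N), ∀ j : Fin 23,
          c (Fin.castSucc j) = ((f * gm) %ₘ (Polynomial.X ^ 23 - 1)).coeff (j : ℕ)) ∧
        c (Fin.last 23) = - ∑ j : Fin 23, c (Fin.castSucc j))

/-- The sum of those monomials of `A` that are divisible by `X i * X j`. -/
def divPart {σ : Type*} (A : MvPolynomial σ ℚ) (i j : σ) : MvPolynomial σ ℚ :=
  ∑ d ∈ A.support.filter (fun d => d i ≠ 0 ∧ d j ≠ 0), monomial d (A.coeff d)

namespace QR24

/-! ### Expansion of the weight enumerator -/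


/-- The coefficient with which a coordinate `c` contributes when the summand `z` (for `t = 0`) or
`± y₀` (for `t = 1`) is chosen from `z ± y₀`. Valuations `0` and `1` only allow `t = 0`. -/
def sgn (c : ZMod 8) (t : ZMod 2) : ℚ :=
  if t = 0 then 1 else if c = 0 then 1 else if c = 4 then -1 else 0

/-- The index of the variable that a coordinate `c` contributes for the choice `t`; for `t = 1` this
is the variable `y₀`, also in the cases where the coefficient `sgn c t` vanishes. -/
def slot (c : ZMod 8) (t : ZMod 2) : Fin 4 :=
  if t = 0 then (if c.val % 2 = 1 then 0 else if c.val % 4 = 2 then 1 else 3) else 2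

/-- The monomial of the substituted weight enumerator that belongs to the codeword `c` and the set
`T` of coordinates (given by its indicator) at which `± y₀` is chosen from `z ± y₀`. -/
def term (c : Fin 24 → ZMod 8) (T : Fin 24 → ZMod 2) : MvPolynomial (Fin 4) ℚ :=
  monomial (∑ j, Finsupp.single (slot (c j) (T j)) 1) (∏ j, sgn (c j) (T j))

theorem term_eq_prod (c : Fin 24 → ZMod 8) (T : Fin 24 → ZMod 2) :
    term c T = ∏ j, monomial (Finsupp.single (slot (c j) (T j)) 1) (sgn (c j) (T j)) := by
  rw [term, monomial_sum_prod]

theorem zmod8_cases {P : ZMod 8 → Prop} (h0 : P 0) (h1 : P 1) (h2 : P 2) (h3 : P 3)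
    (h4 : P 4) (h5 : P 5) (h6 : P 6) (h7 : P 7) (c : ZMod 8) : P c := by
  revert c
  intro c
  change Fin 8 at c
  fin_cases c <;> assumption

/-- The images of the four variables under the substitution. -/
def subst : Fin 4 → MvPolynomial (Fin 4) ℚ := ![X 0, X 1, X 3 - X 2, X 3 + X 2]

theorem local_factor (c : ZMod 8) :
    (∏ i : Fin 3, (if c ≠ 0 ∧ padicValNat 2 c.val = (i : ℕ) then
        subst (Fin.castSucc i) else 1)) *
      (if c = 0 then subst (Fin.last 3) else 1) =
    ∑ t : ZMod 2, monomial (Finsupp.single (slot c t) 1) (sgn c t) := by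
  have hv (k : ℕ) (h : k ≠ 0) : padicValNat 2 (2 * k) = padicValNat 2 k + 1 := by
    rw [padicValNat.mul (by norm_num) h]; simp [add_comm]
  have ho (k : ℕ) : padicValNat 2 (2 * k + 1) = 0 :=
    padicValNat.eq_zero_of_not_dvd (by omega)
  have v1 : padicValNat 2 1 = 0 := by simp
  have v2 : padicValNat 2 2 = 1 := by simp
  have v3 : padicValNat 2 3 = 0 := ho 1
  have v4 : padicValNat 2 4 = 2 := by rw [hv 2 (by norm_num), v2]
  have v5 : padicValNat 2 5 = 0 := ho 2
  have v6 : padicValNat 2 6 = 1 := by rw [hv 3 (by norm_num), v3]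
  have v7 : padicValNat 2 7 = 0 := ho 3
  have hs (f : ZMod 2 → MvPolynomial (Fin 4) ℚ) : ∑ t, f t = f 0 + f 1 :=
    Fin.sum_univ_two f
  rw [hs, Fin.prod_univ_three]
  have e1 : (1 : ZMod 8).val = 1 := rfl
  have e2 : (2 : ZMod 8).val = 2 := rfl
  have e3 : (3 : ZMod 8).val = 3 := rfl
  have e4 : (4 : ZMod 8).val = 4 := rfl
  have e5 : (5 : ZMod 8).val = 5 := rfl
  have e6 : (6 : ZMod 8).val = 6 := rfl
  have e7 : (7 : ZMod 8).val = 7 := rfl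
  have d1 : (1 : ZMod 8) ≠ 0 := by decide
  have d2 : (2 : ZMod 8) ≠ 0 := by decide
  have d3 : (3 : ZMod 8) ≠ 0 := by decide
  have d4 : (4 : ZMod 8) ≠ 0 := by decide
  have d5 : (5 : ZMod 8) ≠ 0 := by decide
  have d6 : (6 : ZMod 8) ≠ 0 := by decide
  have d7 : (7 : ZMod 8) ≠ 0 := by decide
  have f1 : (1 : ZMod 8) ≠ 4 := by decide
  have f2 : (2 : ZMod 8) ≠ 4 := by decide
  have f3 : (3 : ZMod 8) ≠ 4 := by decide
  have f5 : (5 : ZMod 8) ≠ 4 := by decide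
  have f6 : (6 : ZMod 8) ≠ 4 := by decide
  have f7 : (7 : ZMod 8) ≠ 4 := by decide
  have hX (i : Fin 4) : (monomial (Finsupp.single i 1) (1 : ℚ)) = X i := rfl
  have hX' (i : Fin 4) : (monomial (Finsupp.single i 1) (-1 : ℚ)) = - X i := by
    rw [map_neg, hX]
  induction c using zmod8_cases <;>
    simp [sgn, slot, subst, e1, e2, e3, e4, e5, e6, e7, v1, v3, v4, v5, v6, v7, d1, d2, d3,
      d4, d5, d6, d7, f1, f2, f3, f5, f6, f7, hX, hX']
  ring

theorem aeval_swe (C : Submodule (ZMod 8) (Fin 24 → ZMod 8)) :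
    aeval subst (swe 2 3 C) =
      ∑ c : Fin 24 → ZMod 8, if c ∈ C then ∑ T : Fin 24 → ZMod 2, term c T else 0 := by
  rw [swe, map_sum]
  refine Finset.sum_congr rfl fun c _ => ?_
  split_ifs with h
  · simp only [map_mul, map_prod, map_pow, aeval_X, term_eq_prod]
    rw [← Fintype.prod_sum fun (j : Fin 24) (t : ZMod 2) =>
        monomial (Finsupp.single (slot (c j) t) 1) (sgn (c j) t),
      ← Finset.prod_congr rfl fun j _ => local_factor (c j),
      Finset.prod_mul_distrib, Finset.prod_comm]
    congr 1
    · refine Finset.prod_congr rfl fun i _ => ?_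
      rw [Finset.prod_ite, Finset.prod_const, Finset.prod_const_one, mul_one]
    · rw [Finset.prod_ite, Finset.prod_const, Finset.prod_const_one, mul_one]
  · simp

theorem coeff_divPart {σ : Type*} (A : MvPolynomial σ ℚ) (i j : σ) (d : σ →₀ ℕ) :
    coeff d (divPart A i j) = if d i ≠ 0 ∧ d j ≠ 0 then coeff d A else 0 := by
  simp only [divPart, coeff_sum, coeff_monomial, Finset.sum_ite_eq', Finset.mem_filter,
    mem_support_iff]
  by_cases h : coeff d A = 0 <;> simp [h]

theorem divPart_sum {ι σ : Type*} (s : Finset ι) (f : ι → MvPolynomial σ ℚ) (i j : σ) :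
    divPart (∑ k ∈ s, f k) i j = ∑ k ∈ s, divPart (f k) i j := by
  ext d
  simp only [coeff_divPart, coeff_sum]
  split_ifs <;> simp

theorem divPart_smul {σ : Type*} (r : ℚ) (A : MvPolynomial σ ℚ) (i j : σ) :
    divPart (r • A) i j = r • divPart A i j := by
  ext d
  simp only [coeff_divPart, coeff_smul]
  split_ifs <;> simp

theorem divPart_monomial {σ : Type*} (e : σ →₀ ℕ) (r : ℚ) (i j : σ) :
    divPart (monomial e r) i j = if e i ≠ 0 ∧ e j ≠ 0 then monomial e r else 0 := by
  ext d
  rw [coeff_divPart]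
  by_cases h : e = d
  · subst h; split_ifs <;> simp
  · have : coeff d (monomial e r) = 0 := by rw [coeff_monomial, if_neg h]
    split_ifs <;> simp [this]

/-! ### A generator matrix -/

/-- A generator matrix in standard form of the lifted extended quadratic residue code of length `24`
modulo `8`; the last column is the extended coordinate `∞`. -/
def tab : List (List ℕ) :=
  [[1, 0, 0, 0, 0, 0, 0, 0, 0, 0, 0, 0, 7, 6, 1, 4, 5, 5, 1, 6, 4, 4, 7, 5],
   [0, 1, 0, 0, 0, 0, 0, 0, 0, 0, 0, 0, 7, 5, 7, 5, 1, 2, 6, 7, 2, 0, 3, 2],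
   [0, 0, 1, 0, 0, 0, 0, 0, 0, 0, 0, 0, 3, 5, 2, 3, 6, 2, 7, 4, 3, 6, 3, 3],
   [0, 0, 0, 1, 0, 0, 0, 0, 0, 0, 0, 0, 3, 1, 2, 6, 4, 7, 7, 5, 0, 7, 1, 4],
   [0, 0, 0, 0, 1, 0, 0, 0, 0, 0, 0, 0, 1, 5, 0, 6, 1, 7, 6, 1, 1, 4, 0, 7],
   [0, 0, 0, 0, 0, 1, 0, 0, 0, 0, 0, 0, 0, 1, 5, 0, 6, 1, 7, 6, 1, 1, 4, 7],
   [0, 0, 0, 0, 0, 0, 1, 0, 0, 0, 0, 0, 4, 0, 5, 5, 4, 2, 5, 7, 6, 1, 5, 3],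
   [0, 0, 0, 0, 0, 0, 0, 1, 0, 0, 0, 0, 5, 6, 3, 1, 4, 3, 5, 7, 3, 2, 6, 2],
   [0, 0, 0, 0, 0, 0, 0, 0, 1, 0, 0, 0, 6, 1, 0, 3, 3, 6, 5, 1, 7, 3, 0, 4],
   [0, 0, 0, 0, 0, 0, 0, 0, 0, 1, 0, 0, 0, 6, 1, 0, 3, 3, 6, 5, 1, 7, 3, 4],
   [0, 0, 0, 0, 0, 0, 0, 0, 0, 0, 1, 0, 3, 6, 3, 5, 1, 4, 0, 4, 1, 5, 2, 5],
   [0, 0, 0, 0, 0, 0, 0, 0, 0, 0, 0, 1, 2, 7, 4, 3, 3, 7, 2, 4, 4, 1, 7, 3]]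

/-- The entries of `tab`. -/
def gen (i : Fin 12) (j : Fin 24) : ℕ := (tab.getD i []).getD j 0

/-- The information positions of `gen`: the first twelve coordinates. -/
def info (i : Fin 12) : Fin 24 := Fin.castLE (by norm_num) i

/-- The translation `j ↦ j - 1` of the projective line over `𝔽₂₃`; the point `∞` is `23`. -/
def shift : Equiv.Perm (Fin 24) where
  toFun j := if j.val = 23 then 23 else Fin.ofNat 24 ((j.val + 22) % 23)
  invFun j := if j.val = 23 then 23 else Fin.ofNat 24 ((j.val + 1) % 23)
  left_inv := by decide +kernel
  right_inv := by decide +kernel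

/-- The map `j ↦ -1/j` of the projective line over `𝔽₂₃`; the point `∞` is `23`, and
`j ^ 21 = 1/j` modulo `23`. -/
def inversion : Equiv.Perm (Fin 24) where
  toFun j := if j.val = 23 then 0 else if j.val = 0 then 23 else
    Fin.ofNat 24 (23 - j.val ^ 21 % 23)
  invFun j := if j.val = 23 then 0 else if j.val = 0 then 23 else
    Fin.ofNat 24 (23 - j.val ^ 21 % 23)
  left_inv := by decide +kernel
  right_inv := by decide +kernel

/-- The units modulo `8` by which the coordinates have to be multiplied in order to turn
`inversion` into an automorphism of the code. -/
def invUnit (j : Fin 24) : ℕ :=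
  if j.val = 23 then 3 else if j.val = 0 then 5 else if j.val ^ 11 % 23 = 1 then 1 else 7

theorem gen_info : ∀ i k : Fin 12, gen i (info k) = if i = k then 1 else 0 := by
  decide +kernel

theorem gen_orthogonal : ∀ i k : Fin 12, (∑ j, gen i j * gen k j) % 8 = 0 := by
  decide +kernel

theorem gen_shift : ∀ (i : Fin 12) (j : Fin 24),
    (∑ k, gen i (shift (info k)) * gen k j) % 8 = gen i (shift j) % 8 := by
  decide +kernel

theorem gen_inversion : ∀ (i : Fin 12) (j : Fin 24),
    (∑ k, invUnit (info k) * gen i (inversion (info k)) * gen k j) % 8 =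
      invUnit j * gen i (inversion j) % 8 := by
  decide +kernel

/-- Modulo `2`, every unit vector is a combination of a row of the dual basis to the information
positions and of rows of `gen`: a word orthogonal to all rows is determined by its information
positions. -/
theorem gen_dual : ∀ j l : Fin 24,
    ((∑ k, if info k = l then gen k j else 0) +
      (if j.val < 12 then 0 else ∑ i, gen i j * gen i l)) % 2 = if j = l then 1 else 0 := by
  decide +kernel

-- keeps unification from unfolding the table
attribute [irreducible] gen

/-! ### The sums over the code -/

/-- The codeword with message `u`. -/
def word (u : Fin 12 → ZMod 8) (j : Fin 24) : ZMod 8 := ∑ i, u i * (gen i j : ZMod 8)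

theorem word_info (u : Fin 12 → ZMod 8) (k : Fin 12) : word u (info k) = u k := by
  simp [word, gen_info]

theorem word_orthogonal (u v : Fin 12 → ZMod 8) : ∑ j, word u j * word v j = 0 := by
  have h (i k : Fin 12) : ∑ j, (gen i j : ZMod 8) * (gen k j : ZMod 8) = 0 := by
    have := gen_orthogonal i k
    have h' : ((∑ j, gen i j * gen k j : ℕ) : ZMod 8) = 0 :=
      (ZMod.natCast_eq_zero_iff _ 8).2 (Nat.dvd_of_mod_eq_zero this)
    push_cast at h'
    exact h'
  calc ∑ j, word u j * word v j
      = ∑ j, ∑ i, ∑ k, u i * v k * ((gen i j : ZMod 8) * (gen k j : ZMod 8)) := by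
        refine Finset.sum_congr rfl fun j _ => ?_
        rw [word, word, Finset.sum_mul_sum]
        exact Finset.sum_congr rfl fun i _ => Finset.sum_congr rfl fun k _ => by ring
    _ = ∑ i, ∑ k, u i * v k * ∑ j, (gen i j : ZMod 8) * (gen k j : ZMod 8) := by
        rw [Finset.sum_comm]
        refine Finset.sum_congr rfl fun i _ => ?_
        rw [Finset.sum_comm]
        exact Finset.sum_congr rfl fun k _ => by rw [Finset.mul_sum]
    _ = 0 := by simp [h]

/-- The contribution of the choice `T` to the substituted weight enumerator. -/
def charSum (T : Fin 24 → ZMod 2) : MvPolynomial (Fin 4) ℚ :=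
  ∑ u : Fin 12 → ZMod 8, term (word u) T

theorem unit_mul_facts : ∀ e c : ZMod 8, e.val % 2 = 1 →
    (e * c = 0 ↔ c = 0) ∧ (e * c = 4 ↔ c = 4) ∧ (e * c).val % 2 = c.val % 2 ∧
      ((e * c).val % 4 = 2 ↔ c.val % 4 = 2) := by
  decide +kernel

theorem sgn_unit_mul (e c : ZMod 8) (he : e.val % 2 = 1) (t : ZMod 2) :
    sgn (e * c) t = sgn c t := by
  obtain ⟨h0, h4, -, -⟩ := unit_mul_facts e c he
  simp only [sgn, h0, h4]

theorem slot_unit_mul (e c : ZMod 8) (he : e.val % 2 = 1) (t : ZMod 2) :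
    slot (e * c) t = slot c t := by
  obtain ⟨-, -, h1, h2⟩ := unit_mul_facts e c he
  simp only [slot, h1, h2]

theorem term_comp_perm (σ : Equiv.Perm (Fin 24)) (c : Fin 24 → ZMod 8) (T : Fin 24 → ZMod 2) :
    term (c ∘ σ) (T ∘ σ) = term c T := by
  rw [term_eq_prod, term_eq_prod]
  exact Equiv.prod_comp σ fun j => monomial (Finsupp.single (slot (c j) (T j)) 1)
    (sgn (c j) (T j))

/-- `charSum` is invariant under the permutation part of a monomial automorphism of the code. -/
theorem charSum_comp_perm (σ : Equiv.Perm (Fin 24)) (e : Fin 24 → ℕ) (he : ∀ j, e j % 2 = 1)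
    (h : ∀ (i : Fin 12) (j : Fin 24), (∑ k, e (info k) * gen i (σ (info k)) * gen k j) % 8 =
      e j * gen i (σ j) % 8) (T : Fin 24 → ZMod 2) :
    charSum (T ∘ σ) = charSum T := by
  have heu (j : Fin 24) : IsUnit (e j : ZMod 8) := by
    rw [ZMod.isUnit_iff_coprime]
    exact Nat.Coprime.pow_right 3 (Nat.coprime_two_right.2 (Nat.odd_iff.2 (he j)))
  have hev (j : Fin 24) : (e j : ZMod 8).val % 2 = 1 := by
    rw [ZMod.val_natCast, Nat.mod_mod_of_dvd _ (by norm_num)]; exact he j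
  let A (u : Fin 12 → ZMod 8) (k : Fin 12) : ZMod 8 := e (info k) * word u (σ (info k))
  have hA (u : Fin 12 → ZMod 8) (j : Fin 24) : word (A u) j = e j * word u (σ j) := by
    have h' (i : Fin 12) : (e j : ZMod 8) * (gen i (σ j) : ZMod 8) =
        ∑ k, (e (info k) : ZMod 8) * (gen i (σ (info k)) : ZMod 8) * (gen k j : ZMod 8) := by
      have := (ZMod.natCast_eq_natCast_iff' _ _ 8).2 (h i j)
      push_cast at this
      exact this.symm
    calc word (A u) j
        = ∑ k, ∑ i, u i *
            ((e (info k) : ZMod 8) * (gen i (σ (info k)) : ZMod 8) * (gen k j : ZMod 8)) := by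
          refine Finset.sum_congr rfl fun k _ => ?_
          simp only [A, word, Finset.mul_sum, Finset.sum_mul]
          exact Finset.sum_congr rfl fun i _ => by ring
      _ = ∑ i, u i * ((e j : ZMod 8) * (gen i (σ j) : ZMod 8)) := by
          rw [Finset.sum_comm]
          exact Finset.sum_congr rfl fun i _ => by rw [h' i, Finset.mul_sum]
      _ = e j * word u (σ j) := by
          rw [word, Finset.mul_sum]
          exact Finset.sum_congr rfl fun i _ => by ring
  have hinj : Function.Injective A := by
    intro u v huv
    have hw (j : Fin 24) : word u j = word v j := by
      have h1 := hA u (σ.symm j)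
      rw [huv, hA v, Equiv.apply_symm_apply] at h1
      exact ((heu _).mul_left_cancel h1).symm
    funext k
    rw [← word_info u k, ← word_info v k, hw]
  have hbij : Function.Bijective A := Finite.injective_iff_bijective.1 hinj
  rw [charSum, charSum, ← hbij.sum_comp]
  refine Finset.sum_congr rfl fun u _ => ?_
  rw [← term_comp_perm σ (word u) T, term, term]
  simp only [hA, Function.comp, sgn_unit_mul _ _ (hev _), slot_unit_mul _ _ (hev _)]

theorem charSum_shift (T : Fin 24 → ZMod 2) : charSum (T ∘ shift) = charSum T :=
  charSum_comp_perm shift (fun _ => 1) (fun _ => rfl)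
    (fun i j => by simpa using gen_shift i j) T

theorem charSum_inversion (T : Fin 24 → ZMod 2) : charSum (T ∘ inversion) = charSum T :=
  charSum_comp_perm inversion invUnit (by decide +kernel) gen_inversion T

/-- The nontrivial character of `ℤ/2ℤ`. -/
def chi (m : ZMod 2) : ℚ := if m = 0 then 1 else -1

theorem chi_add (a b : ZMod 2) : chi (a + b) = chi a * chi b := by
  have h (a b : ZMod 2) : (a = 0 ∧ b = 0 ∧ a + b = 0) ∨ (a = 0 ∧ b ≠ 0 ∧ a + b ≠ 0) ∨
      (a ≠ 0 ∧ b = 0 ∧ a + b ≠ 0) ∨ (a ≠ 0 ∧ b ≠ 0 ∧ a + b = 0) := by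
    revert a b; decide
  rcases h a b with ⟨h1, h2, h3⟩ | ⟨h1, h2, h3⟩ | ⟨h1, h2, h3⟩ | ⟨h1, h2, h3⟩ <;>
    simp [chi, h1, h2, h3]

theorem prod_chi {ι : Type*} (s : Finset ι) (f : ι → ZMod 2) :
    ∏ j ∈ s, chi (f j) = chi (∑ j ∈ s, f j) := by
  induction s using Finset.cons_induction with
  | empty => simp [chi]
  | cons a s ha ih => rw [Finset.prod_cons, Finset.sum_cons, chi_add, ih]

theorem add_four_mul_facts : ∀ (c : ZMod 8) (m : ZMod 8),
    (c + 4 * m).val % 2 = c.val % 2 ∧ (c + 4 * m).val % 4 = c.val % 4 ∧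
    (m.val % 2 = 0 → c + 4 * m = c) ∧
    (m.val % 2 = 1 → (c + 4 * m = 0 ↔ c = 4) ∧ (c + 4 * m = 4 ↔ c = 0)) := by
  decide +kernel

theorem slot_add_four_mul (c m : ZMod 8) (t : ZMod 2) : slot (c + 4 * m) t = slot c t := by
  obtain ⟨h1, h2, -⟩ := add_four_mul_facts c m
  simp only [slot, h1, h2]

theorem sgn_add_four_mul (c : ZMod 8) (n : ℕ) (t : ZMod 2) :
    sgn (c + 4 * (n : ZMod 8)) t = chi (t * (n : ZMod 2)) * sgn c t := by
  obtain ⟨-, -, h0, h1⟩ := add_four_mul_facts c n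
  rw [ZMod.val_natCast, Nat.mod_mod_of_dvd _ (by norm_num)] at h0 h1
  rcases Nat.mod_two_eq_zero_or_one n with hn | hn
  · have : (n : ZMod 2) = 0 := (ZMod.natCast_eq_zero_iff _ 2).2 (Nat.dvd_of_mod_eq_zero hn)
    simp [h0 hn, this, chi]
  · have : (n : ZMod 2) = 1 := by
      have := (ZMod.natCast_eq_natCast_iff' n 1 2).2 hn
      simpa using this
    obtain ⟨h2, h3⟩ := h1 hn
    simp only [sgn, h2, h3, this, mul_one, chi]
    by_cases ht : t = 0
    · simp [ht]
    · have h40 : (4 : ZMod 8) ≠ 0 := by decide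
      by_cases c0 : c = 0
      · subst c0; simp [ht, h40.symm]
      · by_cases c4 : c = 4
        · subst c4; simp [ht, h40]
        · simp [ht, c0, c4]

/-- Adding four times a codeword multiplies a summand by a character of that codeword. -/
theorem term_word_add (u : Fin 12 → ZMod 8) (d : Fin 12 → ℕ) (T : Fin 24 → ZMod 2) :
    term (word (fun i => u i + 4 * (d i : ZMod 8))) T =
      chi (∑ i, d i * ∑ j, T j * (gen i j : ZMod 2)) • term (word u) T := by
  have hw (j : Fin 24) : word (fun i => u i + 4 * (d i : ZMod 8)) j =
      word u j + 4 * ((∑ i, d i * gen i j : ℕ) : ZMod 8) := by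
    simp only [word, add_mul, Finset.sum_add_distrib, Nat.cast_sum, Nat.cast_mul,
      Finset.mul_sum, mul_assoc]
  have hs : ∑ j, T j * ((∑ i, d i * gen i j : ℕ) : ZMod 2) =
      ∑ i, (d i : ZMod 2) * ∑ j, T j * (gen i j : ZMod 2) := by
    simp only [Nat.cast_sum, Nat.cast_mul, Finset.mul_sum]
    rw [Finset.sum_comm]
    exact Finset.sum_congr rfl fun i _ => Finset.sum_congr rfl fun j _ => by ring
  simp only [term, hw, slot_add_four_mul, sgn_add_four_mul]
  rw [Finset.prod_mul_distrib, prod_chi, hs, smul_monomial, smul_eq_mul]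

/-- Orthogonality of characters: only words `T` of the dual of the binary code contribute. -/
theorem charSum_eq_zero (T : Fin 24 → ZMod 2) (i : Fin 12)
    (h : ∑ j, T j * (gen i j : ZMod 2) ≠ 0) : charSum T = 0 := by
  let d : Fin 12 → ℕ := fun k => if k = i then 1 else 0
  have h1 : charSum T = ∑ u : Fin 12 → ZMod 8,
      term (word (fun k => u k + 4 * (d k : ZMod 8))) T :=
    (Equiv.sum_comp (Equiv.addRight (fun k => 4 * (d k : ZMod 8)))
      fun u => term (word u) T).symm
  have h2 : chi (∑ k, d k * ∑ j, T j * (gen k j : ZMod 2)) = -1 := by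
    simp only [d, Nat.cast_ite, Nat.cast_one, Nat.cast_zero, ite_mul, one_mul, zero_mul,
      Finset.sum_ite_eq', Finset.mem_univ, if_true]
    rw [chi, if_neg h]
  simp only [term_word_add, h2, neg_smul, one_smul, Finset.sum_neg_distrib] at h1
  exact self_eq_neg.1 h1

/-! ### The binary Golay code -/

/-- The word with message `τ` of the binary code spanned by `gen`, the extended Golay code. -/
def golay (τ : Fin 12 → ZMod 2) (j : Fin 24) : ZMod 2 := ∑ k, τ k * (gen k j : ZMod 2)

/-- The binary code contains its dual. -/
theorem eq_golay_of_orthogonal (T : Fin 24 → ZMod 2)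
    (h : ∀ i, ∑ j, T j * (gen i j : ZMod 2) = 0) : T = golay (T ∘ info) := by
  have hid (j l : Fin 24) : (if j = l then 1 else 0 : ZMod 2) =
      (∑ k, if info k = l then (gen k j : ZMod 2) else 0) +
        (if j.val < 12 then 0 else ∑ i, (gen i j : ZMod 2) * (gen i l : ZMod 2)) := by
    have h1 := gen_dual j l
    have h2 : ((if j = l then 1 else 0 : ℕ) : ZMod 2) =
        (((∑ k, if info k = l then gen k j else 0) +
          (if j.val < 12 then 0 else ∑ i, gen i j * gen i l) : ℕ) : ZMod 2) := by
      rw [ZMod.natCast_eq_natCast_iff', h1]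
      split_ifs <;> rfl
    push_cast at h2
    exact h2
  funext j
  have h₁ : ∑ l, ∑ k, T l * (if info k = l then (gen k j : ZMod 2) else 0) =
      golay (T ∘ info) j := by
    rw [Finset.sum_comm]
    refine Finset.sum_congr rfl fun k _ => ?_
    simp
  have h₂ : ∑ l, T l *
      (if j.val < 12 then 0 else ∑ i, (gen i j : ZMod 2) * (gen i l : ZMod 2)) = 0 := by
    split_ifs
    · simp
    · calc _ = ∑ l, ∑ i, (gen i j : ZMod 2) * (T l * (gen i l : ZMod 2)) := by
            refine Finset.sum_congr rfl fun l _ => ?_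
            rw [Finset.mul_sum]
            exact Finset.sum_congr rfl fun i _ => by ring
        _ = 0 := by
            rw [Finset.sum_comm]
            simp only [← Finset.mul_sum, h, mul_zero, Finset.sum_const_zero]
  calc T j = ∑ l, T l * (if j = l then 1 else 0 : ZMod 2) := by simp
    _ = ∑ l, ∑ k, T l * (if info k = l then (gen k j : ZMod 2) else 0) +
        ∑ l, T l *
          (if j.val < 12 then 0 else ∑ i, (gen i j : ZMod 2) * (gen i l : ZMod 2)) := by
      rw [← Finset.sum_add_distrib]
      exact Finset.sum_congr rfl fun l _ => by rw [hid j l, mul_add, Finset.mul_sum]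
    _ = golay (T ∘ info) j + 0 := by
      rw [h₁, h₂]
    _ = golay (T ∘ info) j := add_zero _

theorem golay_info (τ : Fin 12 → ZMod 2) : golay τ ∘ info = τ := by
  funext k
  simp [golay, gen_info]

theorem golay_injective : Function.Injective golay := fun a b h => by
  rw [← golay_info a, h, golay_info]

theorem golay_add (a b : Fin 12 → ZMod 2) : golay (a + b) = golay a + golay b := by
  funext j
  simp [golay, add_mul, Finset.sum_add_distrib]

/-- The binary word given by the lowest `24` binary digits of `n`. -/
def bits (n : ℕ) (j : Fin 24) : ZMod 2 := if n.testBit j then 1 else 0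

theorem bits_xor (m n : ℕ) : bits (m ^^^ n) = bits m + bits n := by
  funext j
  simp only [bits, Nat.testBit_xor, Pi.add_apply]
  cases m.testBit j <;> cases n.testBit j <;> decide

theorem bits_zero : bits 0 = 0 := by
  funext j
  simp [bits]

/-- The sums of `a` and the elements of all sublists of a list of bit masks. -/
def spanList : List ℕ → ℕ → List ℕ
  | [], a => [a]
  | r :: rs, a => spanList rs a ++ spanList rs (a ^^^ r)

theorem sum_span {α : Type*} [AddCommMonoid α] (f : (Fin 24 → ZMod 2) → α) :
    ∀ (n : ℕ) (r : Fin n → ℕ) (a : ℕ),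
      ∑ τ : Fin n → ZMod 2, f (bits a + ∑ i, τ i • bits (r i)) =
        ((spanList (List.ofFn r) a).map fun m => f (bits m)).sum
  | 0, r, a => by simp [spanList]
  | n + 1, r, a => by
    rw [List.ofFn_succ, spanList, List.map_append, List.sum_append,
      ← sum_span f n _ a, ← sum_span f n _ (a ^^^ r 0),
      ← (Fin.consEquiv fun _ : Fin (n + 1) => ZMod 2).sum_comp, Fintype.sum_prod_type]
    refine (Fin.sum_univ_two _).trans ?_
    congr 1
    · refine Finset.sum_congr rfl fun τ _ => ?_
      rw [Fin.sum_univ_succ]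
      change f (bits a + ((0 : ZMod 2) • bits (r 0) + ∑ i, τ i • bits (r i.succ))) = _
      rw [zero_smul, zero_add]
    · refine Finset.sum_congr rfl fun τ _ => ?_
      rw [Fin.sum_univ_succ]
      change f (bits a + ((1 : ZMod 2) • bits (r 0) + ∑ i, τ i • bits (r i.succ))) = _
      rw [one_smul, bits_xor, add_assoc]

/-- The base octad `{0, 2, 3, 5, 6, 7, 8, 18}` as a bit mask. -/
def base : ℕ := 262637

/-- The rows of `gen` modulo `2`, as bit masks. -/
def maskRows : List ℕ :=
  [13062145, 4845570, 13938692, 7221256, 10170384, 11952160, 15515712, 2019456, 4038912,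
   8077824, 11654144, 14919680]

theorem maskRows_spec : ∀ (i : Fin 12) (j : Fin 24),
    (maskRows.getD i 0).testBit j = decide (gen i j % 2 = 1) := by
  decide +kernel

/-- One step of the cyclic shift of the positions `0, …, 22` of a bit mask; the position
`23`, which stands for `∞`, is fixed. -/
def rot (n : ℕ) : ℕ :=
  (n <<< 1 &&& 8388607) ||| (n >>> 22 &&& 1) ||| (n &&& 8388608)

/-- The `k`-fold iterate of `rot`. -/
def rotPow : ℕ → ℕ → ℕ
  | 0, n => n
  | k + 1, n => rotPow k (rot n)

/-- Triples `(x, k, y)` for which the octad `y` is the image under `inversion` of the `k`-th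
rotation of the octad `x`; here `x` is the base octad. -/
def links₁ : List (ℕ × ℕ × ℕ) :=
  [(base, 0, 10021376), (base, 1, 5939296), (base, 2, 1256224), (base, 3, 1675812)]

/-- Quadruples `(x, k, l, r)` for which the `l`-th rotation of the octad `r` is the image under
`inversion` of the `k`-th rotation of the octad `x`; here `x` is the last entry of a member of
`links₁`, and `r` runs over representatives of all `33` classes of octads under rotation. -/
def links₂ : List (ℕ × ℕ × ℕ × ℕ) :=
  [(10021376, 0, 18, 15777), (10021376, 1, 8, 304405), (10021376, 2, 0, 5279), (10021376,
   3, 10, 8546577), (10021376, 4, 22, 8421811), (10021376, 5, 6, 201013), (10021376, 6, 0,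
   39257), (10021376, 7, 8, 99029), (10021376, 8, 0, 8524371), (10021376, 9, 8, 8505411),
   (10021376, 10, 6, 8593633), (10021376, 11, 8, 118953), (10021376, 13, 15, 140167),
   (10021376, 14, 9, 8471941), (10021376, 15, 9, 95313), (10021376, 19, 0, 75309),
   (10021376, 20, 16, 133817), (5939296, 1, 8, 8391797), (5939296, 5, 8, 213833),
   (5939296, 11, 9, 272595), (5939296, 13, 5, 69395), (5939296, 14, 16, 57883),
   (5939296, 15, 18, 418953), (5939296, 16, 12, 283537), (5939296, 20, 4, 153797),
   (5939296, 21, 2, 45159), (1256224, 3, 18, 8431757), (1256224, 4, 21, 18147),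
   (1256224, 6, 15, 8412681), (1256224, 7, 8, 8675909), (1675812, 11, 7, 8398155),
   (1675812, 12, 17, 298027), (1675812, 20, 19, 52005)]

theorem links₁_spec : ∀ x ∈ links₁, x.1 = base ∧ ∀ j : Fin 24,
    x.2.2.testBit j = (rotPow x.2.1 x.1).testBit (inversion j) := by
  decide +kernel

theorem links₂_spec : ∀ x ∈ links₂, x.1 ∈ links₁.map (fun y => y.2.2) ∧ ∀ j : Fin 24,
    (rotPow x.2.2.1 x.2.2.2).testBit j = (rotPow x.2.1 x.1).testBit (inversion j) := by
  decide +kernel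

/-- The number of ones among the lowest `24` binary digits. -/
def pop (n : ℕ) : ℕ :=
  n % 2 + n / 2 % 2 + n / 2 ^ 2 % 2 + n / 2 ^ 3 % 2 + n / 2 ^ 4 % 2 + n / 2 ^ 5 % 2 +
    n / 2 ^ 6 % 2 + n / 2 ^ 7 % 2 + n / 2 ^ 8 % 2 + n / 2 ^ 9 % 2 + n / 2 ^ 10 % 2 +
    n / 2 ^ 11 % 2 + n / 2 ^ 12 % 2 + n / 2 ^ 13 % 2 + n / 2 ^ 14 % 2 + n / 2 ^ 15 % 2 +
    n / 2 ^ 16 % 2 + n / 2 ^ 17 % 2 + n / 2 ^ 18 % 2 + n / 2 ^ 19 % 2 + n / 2 ^ 20 % 2 +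
    n / 2 ^ 21 % 2 + n / 2 ^ 22 % 2 + n / 2 ^ 23 % 2

/-- Whether one of the rotations `rotPow i n`, `i < k`, occurs in `l`. The bound `418953` is
the largest value modulo `2 ^ 23` of a representative in `links₂`; testing it first only
saves time. -/
def meets (l : List ℕ) : ℕ → ℕ → Bool
  | 0, _ => false
  | k + 1, n => (Nat.ble (n % 2 ^ 23) 418953 && l.any (Nat.beq n)) || meets l k (rot n)

/-- `1` for an octad with a rotation among the representatives in `links₂`, `0` for zero and
for weights `12`, `16`, `24`, and a number exceeding `759` otherwise. -/
def grade (n : ℕ) : ℕ :=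
  bif Nat.beq (pop n) 8 then (bif meets (links₂.map fun x => x.2.2.2) 23 n then 1 else 1000)
  else bif Nat.beq (pop n) 12 || Nat.beq (pop n) 16 || Nat.beq (pop n) 24 || Nat.beq n 0 then 0
  else 1000

/-- The sum of `p` over `spanList`, in a form that is quick to evaluate. -/
def tally (p : ℕ → ℕ) : List ℕ → ℕ → ℕ
  | [], a => p a
  | r :: rs, a => Nat.add (tally p rs a) (tally p rs (Nat.xor a r))

/-- By the definition of `grade` this says all at once that the weights of the Golay code are `0`,
`8`, `12`, `16`, `24`, that there are `759` octads, and that each of them has a rotation among the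
representatives in `links₂`. -/
theorem tally_grade : Nat.beq (tally grade maskRows 0) 759 = true := by
  decide +kernel

theorem tally_eq (p : ℕ → ℕ) : ∀ (l : List ℕ) (a : ℕ),
    tally p l a = ((spanList l a).map p).sum
  | [], a => by simp [tally, spanList]
  | r :: rs, a => by
    rw [tally, spanList, List.map_append, List.sum_append, tally_eq p rs a,
      tally_eq p rs (Nat.xor a r)]
    rfl

/-- The Hamming weight of a binary word. -/
def wt (T : Fin 24 → ZMod 2) : ℕ := ∑ j, (T j).val

theorem pop_eq_wt (n : ℕ) : pop n = wt (bits n) := by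
  have h (j : Fin 24) : (bits n j).val = n / 2 ^ (j : ℕ) % 2 := by
    rw [bits, ← Nat.toNat_testBit]
    cases n.testBit j <;> rfl
  simp only [wt, h, Fin.sum_univ_castSucc, Fin.sum_univ_zero]
  simp [pop]

theorem bits_rot (n : ℕ) : bits (rot n) = bits n ∘ shift := by
  funext j
  have h : (rot n).testBit j = n.testBit (shift j) := by
    fin_cases j <;>
      simp [rot, shift, Nat.testBit_and, Nat.testBit_or, Nat.testBit_shiftLeft] <;>
      simp [Nat.testBit, Nat.shiftRight_eq_div_pow] <;> omega
  rw [bits, h]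
  rfl

theorem golay_eq_bits (τ : Fin 12 → ZMod 2) :
    golay τ = bits 0 + ∑ i : Fin 12, τ i • bits (maskRows.getD i 0) := by
  funext j
  rw [bits_zero, zero_add, golay, Finset.sum_apply]
  refine Finset.sum_congr rfl fun i _ => ?_
  rw [Pi.smul_apply, smul_eq_mul, bits, maskRows_spec]
  congr 1
  rcases Nat.mod_two_eq_zero_or_one (gen i j) with h | h
  · rw [h, (ZMod.natCast_eq_zero_iff _ 2).2 (Nat.dvd_of_mod_eq_zero h)]
    rfl
  · rw [h]
    have := (ZMod.natCast_eq_natCast_iff' (gen i j) 1 2).2 h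
    rw [this]
    rfl

theorem sum_golay {α : Type*} [AddCommMonoid α] (f : (Fin 24 → ZMod 2) → α) :
    ∑ τ : Fin 12 → ZMod 2, f (golay τ) =
      ((spanList maskRows 0).map fun m => f (bits m)).sum := by
  have h : maskRows = List.ofFn fun i : Fin 12 => maskRows.getD i 0 := by decide
  conv_rhs => rw [h]
  rw [← sum_span]
  exact Finset.sum_congr rfl fun τ _ => by rw [golay_eq_bits]

theorem exists_bits_eq_golay (τ : Fin 12 → ZMod 2) :
    ∃ n ∈ spanList maskRows 0, bits n = golay τ := by
  by_contra! hne
  have h := sum_golay fun T => if T = golay τ then 1 else 0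
  have h0 : ((spanList maskRows 0).map fun m => if bits m = golay τ then 1 else 0).sum = 0 := by
    refine List.sum_eq_zero fun x hx => ?_
    obtain ⟨m, hm, rfl⟩ := List.mem_map.1 hx
    rw [if_neg (hne m hm)]
  rw [h0] at h
  have := Finset.sum_eq_zero_iff.1 h τ (Finset.mem_univ _)
  simp at this

theorem grade_le {n : ℕ} (hn : n ∈ spanList maskRows 0) : grade n < 1000 := by
  have h := Nat.eq_of_beq_eq_true tally_grade
  rw [tally_eq] at h
  have := List.le_sum_of_mem (List.mem_map_of_mem (f := grade) hn)
  omega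

theorem golay_weight (τ : Fin 12 → ZMod 2) : golay τ = 0 ∨ wt (golay τ) = 8 ∨
    wt (golay τ) = 12 ∨ wt (golay τ) = 16 ∨ wt (golay τ) = 24 := by
  obtain ⟨n, hn, h⟩ := exists_bits_eq_golay τ
  have hg := grade_le hn
  rw [← h, ← pop_eq_wt]
  by_contra! hne
  obtain ⟨h0, h8, h12, h16, h24⟩ := hne
  have hn0 : n ≠ 0 := fun h' => h0 (by rw [h', bits_zero])
  have hb {a b : ℕ} (h : a ≠ b) : Nat.beq a b = false := by
    rw [← Bool.not_eq_true]; exact fun h' => h (Nat.eq_of_beq_eq_true h')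
  rw [grade, hb h8, hb h12, hb h16, hb h24, hb hn0] at hg
  simp at hg

theorem octad_count :
    ∑ τ : Fin 12 → ZMod 2, (if wt (golay τ) = 8 then 1 else 0) = 759 := by
  rw [sum_golay fun T => if wt T = 8 then 1 else 0]
  have h := Nat.eq_of_beq_eq_true tally_grade
  rw [tally_eq] at h
  rw [← h]
  refine congrArg List.sum (List.map_congr_left fun n hn => ?_)
  have hg := grade_le hn
  rw [← pop_eq_wt]
  have hb {a b : ℕ} (h : a ≠ b) : Nat.beq a b = false := by
    rw [← Bool.not_eq_true]; exact fun h' => h (Nat.eq_of_beq_eq_true h')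
  have hr (b : Bool) (m k : ℕ) (h : (bif b then k else m) < m) : (bif b then k else m) = k := by
    cases b
    · exact absurd h (lt_irrefl _)
    · rfl
  by_cases h8 : pop n = 8
  · rw [if_pos h8]
    rw [grade, h8] at hg ⊢
    exact (hr _ _ _ hg).symm
  · rw [if_neg h8]
    rw [grade, hb h8] at hg ⊢
    exact (hr _ _ _ hg).symm

/-! ### Transitivity on octads -/

/-- The contribution of one octad to `D_{2,1}`, up to the factor `2 ^ 12`. -/
def octadPoly : MvPolynomial (Fin 4) ℚ :=
  16 * X 0 ^ 8 * X 2 ^ 8 *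
    (-(X 1 ^ 2 * X 3 ^ 6) + 2 * X 1 ^ 4 * X 3 ^ 4 - X 1 ^ 6 * X 3 ^ 2)

/-- The values of `charSum` that the theorem requires, at a word `T` meant to be an octad and
at its complement. -/
def Good (T : Fin 24 → ZMod 2) : Prop :=
  divPart (charSum T) 0 2 = (2 : ℚ) ^ 12 • octadPoly ∧ divPart (charSum (1 + T)) 0 2 = 0

theorem good_shift (T : Fin 24 → ZMod 2) : Good (T ∘ shift) ↔ Good T := by
  have h : 1 + T ∘ shift = (1 + T) ∘ shift := rfl
  rw [Good, h, charSum_shift, charSum_shift, Good]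

theorem good_inversion (T : Fin 24 → ZMod 2) : Good (T ∘ inversion) ↔ Good T := by
  have h : 1 + T ∘ inversion = (1 + T) ∘ inversion := rfl
  rw [Good, h, charSum_inversion, charSum_inversion, Good]

theorem good_rot (n : ℕ) : Good (bits (rot n)) ↔ Good (bits n) := by
  rw [bits_rot, good_shift]

theorem good_rotPow : ∀ k n : ℕ, Good (bits (rotPow k n)) ↔ Good (bits n)
  | 0, _ => Iff.rfl
  | k + 1, n => by rw [rotPow, good_rotPow k, good_rot]

theorem good_link {m n : ℕ} (h : ∀ j : Fin 24, m.testBit j = n.testBit (inversion j)) :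
    Good (bits m) ↔ Good (bits n) := by
  have : bits m = bits n ∘ inversion := by
    funext j
    rw [bits, h j]
    rfl
  rw [this, good_inversion]

theorem good_of_meets (l : List ℕ) (hl : ∀ r ∈ l, Good (bits r)) :
    ∀ k n : ℕ, meets l k n = true → Good (bits n)
  | 0, n, h => by simp [meets] at h
  | k + 1, n, h => by
    rw [meets, Bool.or_eq_true, Bool.and_eq_true, List.any_eq_true] at h
    rcases h with ⟨-, r, hr, hnr⟩ | h
    · rw [Nat.eq_of_beq_eq_true hnr]
      exact hl r hr
    · exact (good_rot n).1 (good_of_meets l hl k _ h)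

/-- Shifts and the inversion act transitively on the octads, so the base octad decides. -/
theorem good_octad (hbase : Good (bits base)) (τ : Fin 12 → ZMod 2) (h8 : wt (golay τ) = 8) :
    Good (golay τ) := by
  have h1 : ∀ y ∈ links₁.map (fun y => y.2.2), Good (bits y) := by
    intro y hy
    obtain ⟨x, hx, rfl⟩ := List.mem_map.1 hy
    obtain ⟨hb, hj⟩ := links₁_spec x hx
    rw [good_link hj, good_rotPow, hb]
    exact hbase
  have h2 : ∀ r ∈ links₂.map (fun x => x.2.2.2), Good (bits r) := by
    intro r hr
    obtain ⟨x, hx, rfl⟩ := List.mem_map.1 hr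
    obtain ⟨hb, hj⟩ := links₂_spec x hx
    rw [← good_rotPow x.2.2.1, good_link hj, good_rotPow]
    exact h1 _ hb
  obtain ⟨n, hn, h⟩ := exists_bits_eq_golay τ
  rw [← h] at h8 ⊢
  have hg := grade_le hn
  rw [← pop_eq_wt] at h8
  rw [grade, h8] at hg
  cases hm : meets (links₂.map fun x => x.2.2.2) 23 n with
  | false => rw [hm] at hg; exact absurd hg (lt_irrefl 1000)
  | true => exact good_of_meets _ h2 23 n hm

/-! ### Binary words without contribution -/

/-- Reduction modulo `2`. -/
def red : ZMod 8 →+* ZMod 2 := ZMod.castHom (by norm_num) (ZMod 2)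

theorem red_facts : ∀ c : ZMod 8, (c = 0 ∨ c = 4 → red c = 0 ∧ c * c = 0 ∧ c * 2 = 0) ∧
    (c.val % 2 = 1 ↔ red c = 1) ∧ (red c = 1 → c * c = 1 ∧ c * 4 = 4) := by
  decide +kernel

theorem golay_red (u : Fin 12 → ZMod 8) (j : Fin 24) : golay (red ∘ u) j = red (word u j) := by
  rw [golay, word, map_sum]
  exact Finset.sum_congr rfl fun i _ => by rw [map_mul, map_natCast]; rfl

/-- If a summand of `charSum T` has monomials divisible by `X 0 * X 2`, all coordinates of the
codeword on the support of `T` are `0` or `4`, some coordinate is odd, and `T` is nonzero. -/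
theorem support_of_divPart_ne_zero (c : Fin 24 → ZMod 8) (T : Fin 24 → ZMod 2)
    (h : divPart (term c T) 0 2 ≠ 0) :
    (∀ j, T j ≠ 0 → c j = 0 ∨ c j = 4) ∧ (∃ j, red (c j) = 1) ∧ ∃ j, T j ≠ 0 := by
  rw [term, divPart_monomial] at h
  have hslot (i : Fin 4) (hi : (∑ j, Finsupp.single (slot (c j) (T j)) 1 : Fin 4 →₀ ℕ) i ≠ 0) :
      ∃ j, slot (c j) (T j) = i := by
    rw [Finsupp.finsetSum_apply] at hi
    obtain ⟨j, -, hj⟩ := Finset.exists_ne_zero_of_sum_ne_zero hi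
    refine ⟨j, ?_⟩
    by_contra hne
    rw [Finsupp.single_eq_of_ne (Ne.symm hne)] at hj
    exact hj rfl
  split_ifs at h with h02
  · have hp : ∏ j, sgn (c j) (T j) ≠ 0 := fun h0 => h (by rw [h0, monomial_zero])
    rw [Finset.prod_ne_zero_iff] at hp
    refine ⟨fun j hj => ?_, ?_, ?_⟩
    · have := hp j (Finset.mem_univ _)
      rw [sgn, if_neg hj] at this
      by_contra! hne
      rw [if_neg hne.1, if_neg hne.2] at this
      exact this rfl
    · obtain ⟨j, hj⟩ := hslot 0 h02.1
      refine ⟨j, (red_facts (c j)).2.1.1 ?_⟩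
      rw [slot] at hj
      by_contra hne
      rw [if_neg hne] at hj
      split_ifs at hj <;> exact absurd hj (by decide)
    · obtain ⟨j, hj⟩ := hslot 2 h02.2
      refine ⟨j, fun h0 => ?_⟩
      rw [slot, if_pos h0] at hj
      split_ifs at hj <;> exact absurd hj (by decide)
  · exact absurd rfl h

theorem zmod2_cases (a : ZMod 2) : a = 0 ∨ a = 1 := by
  revert a; decide

theorem wt_add {a T : Fin 24 → ZMod 2} (h : ∀ j, T j ≠ 0 → a j = 0) :
    wt (a + T) = wt a + wt T := by
  rw [wt, wt, wt, ← Finset.sum_add_distrib]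
  refine Finset.sum_congr rfl fun j _ => ?_
  rw [Pi.add_apply]
  rcases zmod2_cases (T j) with hT | hT
  · simp [hT]
  · simp [h j (by rw [hT]; decide)]

theorem val_le_one (a : ZMod 2) : a.val ≤ 1 := by
  revert a; decide

theorem wt_le (T : Fin 24 → ZMod 2) : wt T ≤ 24 := by
  have := Finset.sum_le_sum fun j (_ : j ∈ Finset.univ) => val_le_one (T j)
  simpa [wt] using this

theorem eq_of_wt_le {a T : Fin 24 → ZMod 2} (h : ∀ j, (a j).val ≤ (T j).val)
    (hw : wt T ≤ wt a) : a = T := by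
  have h1 : wt a = wt T := le_antisymm (Finset.sum_le_sum fun j _ => h j) hw
  have h2 := (Finset.sum_eq_sum_iff_of_le fun j _ => h j).1 h1
  funext j
  exact ZMod.val_injective 2 (h2 j (Finset.mem_univ _))

theorem eq_one_of_wt {T : Fin 24 → ZMod 2} (h : wt T = 24) : T = 1 := by
  refine eq_of_wt_le (fun j => ?_) (by rw [h]; exact wt_le 1)
  exact val_le_one _

/-- The reduction modulo `2` of a contributing codeword is a nonzero word of the Golay code, hence
of weight at least `8`, and disjoint from `T`. -/
theorem contributing (u : Fin 12 → ZMod 8) (T : Fin 24 → ZMod 2)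
    (h : divPart (term (word u) T) 0 2 ≠ 0) :
    (∀ j, T j ≠ 0 → golay (red ∘ u) j = 0) ∧ 8 ≤ wt (golay (red ∘ u)) := by
  obtain ⟨h1, ⟨j, hj⟩, -⟩ := support_of_divPart_ne_zero _ _ h
  refine ⟨fun j hj => ?_, ?_⟩
  · rw [golay_red]
    exact ((red_facts _).1 (h1 j hj)).1
  · have h0 : golay (red ∘ u) ≠ 0 := fun h0 => by
      rw [← golay_red, h0, Pi.zero_apply] at hj
      exact absurd hj (by decide)
    rcases golay_weight (red ∘ u) with h | h | h | h | h
    · exact absurd h h0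
    all_goals omega

theorem divPart_charSum_eq_zero (T : Fin 24 → ZMod 2)
    (h : ∀ u, divPart (term (word u) T) 0 2 = 0) : divPart (charSum T) 0 2 = 0 := by
  rw [charSum, divPart_sum]
  exact Finset.sum_eq_zero fun u _ => h u

theorem divPart_charSum_zero : divPart (charSum 0) 0 2 = 0 := by
  refine divPart_charSum_eq_zero _ fun u => ?_
  by_contra h
  obtain ⟨j, hj⟩ := (support_of_divPart_ne_zero _ _ h).2.2
  exact hj rfl

theorem divPart_charSum_full (T : Fin 24 → ZMod 2) (hT : wt T = 24) :
    divPart (charSum T) 0 2 = 0 := by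
  refine divPart_charSum_eq_zero _ fun u => ?_
  by_contra h
  obtain ⟨h1, h2⟩ := contributing u T h
  have h3 := wt_add h1
  have h4 := wt_le (golay (red ∘ u) + T)
  omega

/-- A contributing codeword would have twelve odd coordinates and the others in `{0, 4}`, hence
Euclidean norm `12`, whereas all norms vanish modulo `8`. -/
theorem divPart_charSum_dodecad (τ : Fin 12 → ZMod 2) (hT : wt (golay τ) = 12) :
    divPart (charSum (golay τ)) 0 2 = 0 := by
  refine divPart_charSum_eq_zero _ fun u => ?_
  by_contra h
  obtain ⟨h1, h2⟩ := contributing u _ h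
  have h3 := wt_add h1
  have h4 : wt (golay (red ∘ u) + golay τ) = 24 := by
    have h5 := wt_le (golay (red ∘ u) + golay τ)
    rw [← golay_add] at h3 h5 ⊢
    rcases golay_weight (red ∘ u + τ) with h | h | h | h | h
    · rw [h] at h3
      simp only [wt, Pi.zero_apply, ZMod.val_zero, Finset.sum_const_zero] at h3 hT
      omega
    all_goals omega
  have h12 : wt (golay (red ∘ u)) = 12 := by omega
  have hone : golay (red ∘ u) + golay τ = 1 := eq_one_of_wt h4
  have hsq (j : Fin 24) : word u j * word u j = ((golay (red ∘ u) j).val : ZMod 8) := by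
    have hj := congrFun hone j
    rw [Pi.add_apply] at hj
    rcases zmod2_cases (golay τ j) with ht | ht
    · rw [ht, add_zero] at hj
      rw [hj, Pi.one_apply]
      rw [golay_red, Pi.one_apply] at hj
      exact ((red_facts _).2.2 hj).1.trans (by decide)
    · have ht' : golay τ j ≠ 0 := by rw [ht]; decide
      rw [h1 j ht', ((red_facts _).1 ((support_of_divPart_ne_zero _ _ h).1 j ht')).2.1]
      rfl
  have hn := word_orthogonal u u
  simp only [hsq] at hn
  rw [← Nat.cast_sum] at hn
  change ((wt (golay (red ∘ u)) : ℕ) : ZMod 8) = 0 at hn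
  rw [h12] at hn
  exact absurd hn (by decide)

/-- The complement of the support of `golay τ` is an octad if there is a contributing codeword. -/
theorem divPart_charSum_sixteen (hbase : Good (bits base)) (τ : Fin 12 → ZMod 2)
    (hT : wt (golay τ) = 16) : divPart (charSum (golay τ)) 0 2 = 0 := by
  by_contra hne
  obtain ⟨u, h⟩ : ∃ u, divPart (term (word u) (golay τ)) 0 2 ≠ 0 := by
    by_contra! h
    exact hne (divPart_charSum_eq_zero _ h)
  obtain ⟨h1, h2⟩ := contributing u _ h
  have h3 := wt_add h1
  have h6 := wt_le (golay (red ∘ u) + golay τ)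
  have hone : golay (red ∘ u) + golay τ = 1 := eq_one_of_wt (by omega)
  have hτ : golay τ = 1 + golay (red ∘ u) := by
    rw [← hone, add_right_comm, CharTwo.add_self_eq_zero, zero_add]
  have h8 : wt (golay (red ∘ u)) = 8 := by omega
  rw [hτ] at hne
  exact hne (good_octad hbase _ h8).2

theorem base_row : ∀ j : Fin 24, (bits base j ≠ 0 → j ≠ 18 → gen 11 j = 0) ∧
    gen 11 18 = 2 ∧ bits base 18 = 1 := by
  decide +kernel

theorem wt_base : wt (bits base) = 8 := by
  rw [← pop_eq_wt]; rfl

/-- The complement of the base octad: a contributing codeword is odd exactly on the base octad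
and `0` or `4` elsewhere, so its inner product with twice row `11` of `gen` is `4`, contradicting
self-orthogonality. -/
theorem divPart_charSum_compl_base : divPart (charSum (1 + bits base)) 0 2 = 0 := by
  refine divPart_charSum_eq_zero _ fun u => ?_
  by_contra h
  obtain ⟨h1, h2⟩ := contributing u _ h
  have hle (j : Fin 24) : (golay (red ∘ u) j).val ≤ (bits base j).val := by
    rcases zmod2_cases (bits base j) with hb | hb
    · have : (1 + bits base) j ≠ 0 := by rw [Pi.add_apply, hb, Pi.one_apply]; decide
      rw [h1 j this]
      exact Nat.zero_le _
    · rw [hb]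
      exact val_le_one _
  have heq : golay (red ∘ u) = bits base := eq_of_wt_le hle (by rw [wt_base]; exact h2)
  have ho := word_orthogonal u (fun i => if i = 11 then 2 else 0)
  have hw (j : Fin 24) : word (fun i => if i = 11 then 2 else 0) j = 2 * (gen 11 j : ZMod 8) := by
    simp [word]
  simp only [hw] at ho
  rw [Finset.sum_eq_single 18] at ho
  · rw [(base_row 18).2.1] at ho
    have h18 : red (word u 18) = 1 := by
      rw [← golay_red, heq]
      exact (base_row 18).2.2
    have := ((red_facts _).2.2 h18).2
    have h4 : (2 : ZMod 8) * ((2 : ℕ) : ZMod 8) = 4 := by decide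
    rw [h4, this] at ho
    exact absurd ho (by decide)
  · intro j _ hj
    rcases zmod2_cases (bits base j) with hb | hb
    · have : (1 + bits base) j ≠ 0 := by rw [Pi.add_apply, hb, Pi.one_apply]; decide
      rw [← mul_assoc, ((red_facts _).1 ((support_of_divPart_ne_zero _ _ h).1 j this)).2.2,
        zero_mul]
    · rw [(base_row j).1 (by rw [hb]; decide) hj]
      simp
  · exact fun hmem => absurd (Finset.mem_univ _) hmem

/-! ### The base octad -/

/-- The summands of `charSum T` only depend on the message modulo `4` if `T` is orthogonal to
all rows of `gen`, so the sum is `2 ^ 12` times the sum over representatives. -/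
theorem charSum_eq_sum_mod_four (T : Fin 24 → ZMod 2)
    (hT : ∀ i, ∑ j, T j * (gen i j : ZMod 2) = 0) :
    charSum T = (2 : ℚ) ^ 12 •
      ∑ a : Fin 12 → Fin 4, term (word fun i => ((a i : ℕ) : ZMod 8)) T := by
  let e : (Fin 12 → Fin 2) × (Fin 12 → Fin 4) ≃ (Fin 12 → ZMod 8) :=
    (Equiv.arrowProdEquivProdArrow (Fin 12) (fun _ => Fin 2) (fun _ => Fin 4)).symm.trans
      (Equiv.arrowCongr (Equiv.refl _) (finProdFinEquiv (m := 2) (n := 4)))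
  have he0 : ∀ p : Fin 2 × Fin 4, @Eq (ZMod 8)
      (finProdFinEquiv (m := 2) (n := 4) p)
      (((p.2 : ℕ) : ZMod 8) + 4 * ((p.1 : ℕ) : ZMod 8)) := by
    rintro ⟨x, y⟩
    fin_cases x <;> fin_cases y <;> rfl
  have he (p : (Fin 12 → Fin 2) × (Fin 12 → Fin 4)) : e p =
      fun i => ((p.2 i : ℕ) : ZMod 8) + 4 * ((p.1 i : ℕ) : ZMod 8) := by
    funext i
    exact he0 (p.1 i, p.2 i)
  rw [charSum, ← e.sum_comp, Fintype.sum_prod_type]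
  have h (d : Fin 12 → Fin 2) (a : Fin 12 → Fin 4) : term (word (e (d, a))) T =
      term (word fun i => ((a i : ℕ) : ZMod 8)) T := by
    rw [he, term_word_add (fun i => ((a i : ℕ) : ZMod 8)) (fun i => (d i : ℕ))]
    simp only [hT, mul_zero, Finset.sum_const_zero, chi, if_true, one_smul]
  simp only [h]
  rw [Finset.sum_const, Finset.card_univ, Fintype.card_fun, Fintype.card_fin, Fintype.card_fin,
    ← Nat.cast_smul_eq_nsmul ℚ]
  norm_num

/-- Messages modulo `4` that vanish at the seven information positions of the base octad. -/
def emb (b : Fin 4 × Fin 4 × Fin 4 × Fin 4 × Fin 4) : Fin 12 → Fin 4 :=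
  ![0, b.1, 0, 0, b.2.1, 0, 0, 0, 0, b.2.2.1, b.2.2.2.1, b.2.2.2.2]

theorem emb_injective : Function.Injective emb := by
  rintro ⟨a, b, c, d, e⟩ ⟨a', b', c', d', e'⟩ h
  have h1 := congrFun h 1
  have h4 := congrFun h 4
  have h9 := congrFun h 9
  have h10 := congrFun h 10
  have h11 := congrFun h 11
  simp only [emb] at h1 h4 h9 h10 h11
  change a = a' at h1
  change b = b' at h4
  change c = c' at h9
  change d = d' at h10
  change e = e' at h11
  rw [h1, h4, h9, h10, h11]

theorem exists_emb (a : Fin 12 → Fin 4)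
    (h : ∀ i, bits base (info i) ≠ 0 → a i = 0) : ∃ b, emb b = a := by
  refine ⟨(a 1, a 4, a 9, a 10, a 11), ?_⟩
  have hb : ∀ i ∈ ([0, 2, 3, 5, 6, 7, 8] : List (Fin 12)), bits base (info i) ≠ 0 := by
    decide +kernel
  have h' (i : Fin 12) (hi : i ∈ ([0, 2, 3, 5, 6, 7, 8] : List (Fin 12))) : a i = 0 :=
    h i (hb i hi)
  funext i
  fin_cases i
  · exact (h' 0 (by decide)).symm
  · rfl
  · exact (h' 2 (by decide)).symm
  · exact (h' 3 (by decide)).symm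
  · rfl
  · exact (h' 5 (by decide)).symm
  · exact (h' 6 (by decide)).symm
  · exact (h' 7 (by decide)).symm
  · exact (h' 8 (by decide)).symm
  · rfl
  · rfl
  · rfl

/-- Only messages that vanish on the base octad contribute to `charSum (bits base)`. -/
theorem divPart_sum_emb :
    ∑ a : Fin 12 → Fin 4, divPart (term (word fun i => ((a i : ℕ) : ZMod 8)) (bits base)) 0 2 =
    ∑ b, divPart (term (word fun i => ((emb b i : ℕ) : ZMod 8)) (bits base)) 0 2 := by
  symm
  refine Fintype.sum_of_injective emb emb_injective _ _ (fun a ha => ?_) fun b => rfl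
  by_contra hne
  refine ha (exists_emb a fun i hi => ?_)
  have h := (support_of_divPart_ne_zero _ _ hne).1 (info i) hi
  rw [word_info] at h
  have hz : ∀ x : Fin 4, ((x : ℕ) : ZMod 8) = 0 ∨ ((x : ℕ) : ZMod 8) = 4 → x = 0 := by
    decide +kernel
  exact hz _ h

/-- A base `32` number encoding the factor of `term` at a coordinate with value `v` modulo `8`: the
digits `0`, …, `3` count the variables, digit `4` the coefficients `-1`, and digit `5` the
coefficients `0`. -/
def code (v : ℕ) (t : Bool) : ℕ :=
  bif t then
    (bif Nat.beq (v % 8) 0 then 1024 else bif Nat.beq (v % 8) 4 then 1049600 else 33555456)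
  else (bif Nat.beq (v % 2) 1 then 1 else bif Nat.beq (v % 4) 2 then 32 else 32768)

theorem code_eq (v : ℕ) (t : Bool) :
    code v t = 32 ^ (slot (v : ZMod 8) (if t then 1 else 0)).val +
      32 ^ 4 * (if sgn (v : ZMod 8) (if t then 1 else 0) = -1 then 1 else 0) +
      32 ^ 5 * (if sgn (v : ZMod 8) (if t then 1 else 0) = 0 then 1 else 0) := by
  have hm : ((v % 8 : ℕ) : ZMod 8) = v := ZMod.natCast_mod v 8
  have hc : code v t = code (v % 8) t := by
    simp only [code, Nat.mod_mod, Nat.mod_mod_of_dvd v (by norm_num : 2 ∣ 8),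
      Nat.mod_mod_of_dvd v (by norm_num : 4 ∣ 8)]
  rw [hc, ← hm]
  have hlt : v % 8 < 8 := Nat.mod_lt _ (by norm_num)
  generalize v % 8 = w at hlt
  have h10 : ((1 : ZMod 2) = 0) = False := by simp
  have hv (w : ℕ) (h : w < 8) : (w : ZMod 8).val = w := ZMod.val_cast_of_lt h
  have h0 (w : ℕ) (h : w < 8) : ((w : ZMod 8) = 0) = (w = 0) := by
    rw [← ZMod.val_eq_zero, hv w h]
  have h4 (w : ℕ) (h : w < 8) : ((w : ZMod 8) = 4) = (w = 4) := by
    have : (4 : ZMod 8) = ((4 : ℕ) : ZMod 8) := rfl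
    rw [this, eq_iff_iff]
    constructor
    · intro h'
      rw [← hv w h, h', hv 4 (by norm_num)]
    · rintro rfl; rfl
  cases t
  · simp only [sgn, slot, hv w hlt, Bool.false_eq_true, if_false, if_true]
    interval_cases w <;> norm_num [code] <;> rfl
  · simp only [sgn, slot, h0 w hlt, h4 w hlt, if_true, h10, if_false]
    interval_cases w <;> norm_num [code] <;> rfl

/-- The exponent vector with the given entries. -/
def expo (a b c d : ℕ) : Fin 4 →₀ ℕ :=
  Finsupp.single 0 a + Finsupp.single 1 b + Finsupp.single 2 c + Finsupp.single 3 d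

theorem eq_expo (e : Fin 4 →₀ ℕ) : e = expo (e 0) (e 1) (e 2) (e 3) := by
  ext i
  fin_cases i <;> simp [expo]

/-- `term` can be read off from the sum of the local codes. -/
theorem term_of_code (v : Fin 24 → ℕ) (t : Fin 24 → Bool) :
    ∃ a b c d s z : ℕ, a ≤ 24 ∧ b ≤ 24 ∧ c ≤ 24 ∧ d ≤ 24 ∧ s ≤ 24 ∧
      ∑ j, code (v j) (t j) = a + 32 * b + 1024 * c + 32768 * d + 1048576 * s + 33554432 * z ∧
      term (fun j => (v j : ZMod 8)) (fun j => if t j then 1 else 0) =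
        monomial (expo a b c d) (if z = 0 then (-1) ^ s else 0) := by
  let sl (j : Fin 24) : Fin 4 := slot (v j : ZMod 8) (if t j then 1 else 0)
  let sg (j : Fin 24) : ℚ := sgn (v j : ZMod 8) (if t j then 1 else 0)
  let e : Fin 4 →₀ ℕ := ∑ j, Finsupp.single (sl j) 1
  have he (i : Fin 4) : e i = ∑ j, if sl j = i then 1 else 0 := by
    simp only [e, Finsupp.finsetSum_apply, Finsupp.single_apply]
  have hle (p : Fin 24 → Prop) [DecidablePred p] : (∑ j, if p j then 1 else 0) ≤ 24 := by
    rw [Finset.sum_boole]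
    exact (Finset.card_le_univ _)
  have hsl : ∑ j, 32 ^ (sl j).val = e 0 + 32 * e 1 + 1024 * e 2 + 32768 * e 3 := by
    simp only [he, Finset.mul_sum, ← Finset.sum_add_distrib]
    refine Finset.sum_congr rfl fun j _ => ?_
    generalize sl j = i
    fin_cases i <;> simp
  refine ⟨e 0, e 1, e 2, e 3, ∑ j, if sg j = -1 then 1 else 0, ∑ j, if sg j = 0 then 1 else 0,
    by rw [he]; exact hle _, by rw [he]; exact hle _, by rw [he]; exact hle _,
    by rw [he]; exact hle _, hle _, ?_, ?_⟩
  · simp only [code_eq, Finset.sum_add_distrib, ← Finset.mul_sum]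
    change ∑ j, 32 ^ (sl j).val + 32 ^ 4 * (∑ j, if sg j = -1 then 1 else 0) +
      32 ^ 5 * (∑ j, if sg j = 0 then 1 else 0) = _
    rw [hsl]
    norm_num
  · rw [← eq_expo, term]
    change monomial e (∏ j, sg j) = _
    refine congrArg (monomial e) ?_
    split_ifs with hz
    · have hz' := Finset.sum_eq_zero_iff.1 hz
      rw [← Finset.prod_pow_eq_pow_sum]
      refine Finset.prod_congr rfl fun j hj => ?_
      have hj0 : sg j ≠ 0 := fun h => by
        have := hz' j hj
        rw [if_pos h] at this
        exact one_ne_zero this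
      have h3 : sg j = 1 ∨ sg j = -1 ∨ sg j = 0 := by
        simp only [sg, sgn]
        split_ifs <;> simp
      rcases h3 with h | h | h
      · rw [h]; norm_num
      · rw [h]; norm_num
      · exact absurd h hj0
    · obtain ⟨j, hj, hne⟩ := Finset.exists_ne_zero_of_sum_ne_zero hz
      refine Finset.prod_eq_zero hj ?_
      by_contra h
      rw [if_neg h] at hne
      exact hne rfl

/-- The columns of the rows `1`, `4`, `9`, `10`, `11` of `gen`, with the membership in the base
octad. -/
def cols : List (ℕ × ℕ × ℕ × ℕ × ℕ × Bool) :=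
  [(0, 0, 0, 0, 0, true), (1, 0, 0, 0, 0, false), (0, 0, 0, 0, 0, true), (0, 0, 0, 0, 0, true),
   (0, 1, 0, 0, 0, false), (0, 0, 0, 0, 0, true), (0, 0, 0, 0, 0, true), (0, 0, 0, 0, 0, true),
   (0, 0, 0, 0, 0, true), (0, 0, 1, 0, 0, false), (0, 0, 0, 1, 0, false), (0, 0, 0, 0, 1, false),
   (7, 1, 0, 3, 2, false), (5, 5, 6, 6, 7, false), (7, 0, 1, 3, 4, false), (5, 6, 0, 5, 3,
   false), (1, 1, 3, 1, 3, false), (2, 7, 3, 4, 7, false), (6, 6, 6, 0, 2, true), (7, 1, 5, 4, 4,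
   false), (2, 1, 1, 1, 4, false), (0, 4, 7, 5, 1, false), (3, 0, 3, 2, 7, false), (2, 7, 4, 5,
   3, false)]

theorem cols_spec : cols = List.ofFn fun j : Fin 24 =>
    (gen 1 j, gen 4 j, gen 9 j, gen 10 j, gen 11 j, base.testBit j) := by
  decide +kernel

/-- The sum of the local codes of the codeword with coefficients `x`, …, `y` at the rows `1`,
`4`, `9`, `10`, `11`. -/
def total (x p q r y : ℕ) : List (ℕ × ℕ × ℕ × ℕ × ℕ × Bool) → ℕ
  | [] => 0
  | c :: l => Nat.add (code (x * c.1 + p * c.2.1 + q * c.2.2.1 + r * c.2.2.2.1 +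
      y * c.2.2.2.2.1) c.2.2.2.2.2) (total x p q r y l)

theorem total_eq_sum (x p q r y : ℕ) : ∀ l : List (ℕ × ℕ × ℕ × ℕ × ℕ × Bool),
    total x p q r y l = (l.map fun c => code (x * c.1 + p * c.2.1 + q * c.2.2.1 +
      r * c.2.2.2.1 + y * c.2.2.2.2.1) c.2.2.2.2.2).sum
  | [] => rfl
  | c :: l => by rw [total, total_eq_sum x p q r y l, List.map_cons, List.sum_cons]; rfl

/-- The codes that contribute monomials divisible by `X 0 * X 2`: for the exponent vectors
`(8, 2, 8, 6)`, `(8, 4, 8, 4)`, `(8, 6, 8, 2)`, `(16, 0, 8, 0)`, each with sign `+` and `-`. -/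
def keys : Fin 8 → ℕ :=
  ![204872, 1253448, 139400, 1187976, 73928, 1122504, 8208, 1056784]

/-- A power of `2048` that tells which key `S` is. It is `0` if `S` is the code of a summand without
odd coordinates or with coefficient `0`, and `2048 ^ 8` if `S` is none of these. -/
def mark (S : ℕ) : ℕ :=
  bif Nat.beq S 204872 then 1 else bif Nat.beq S 1253448 then 2048
  else bif Nat.beq S 139400 then 2048 ^ 2 else bif Nat.beq S 1187976 then 2048 ^ 3
  else bif Nat.beq S 73928 then 2048 ^ 4 else bif Nat.beq S 1122504 then 2048 ^ 5
  else bif Nat.beq S 8208 then 2048 ^ 6 else bif Nat.beq S 1056784 then 2048 ^ 7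
  else bif Nat.beq (S % 32) 0 || Nat.ble 33554432 S then 0 else 2048 ^ 8

/-- A sum of four terms, over `{0, 1, 2, 3}`. -/
def sum4 (p : ℕ → ℕ) : ℕ := Nat.add (Nat.add (Nat.add (p 0) (p 1)) (p 2)) (p 3)

/-- The digits of the right hand side to base `2048` are the multiplicities of the eight keys, and
the digit in position `8` vanishes. -/
theorem mark_total : Nat.beq (sum4 fun x => sum4 fun p => sum4 fun q => sum4 fun r => sum4 fun y =>
    mark (total x p q r y cols)) 2419034537538235075264560 = true := by
  decide +kernel

/-- The coordinates, as natural numbers, of the codeword with message `emb b`. -/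
def coords (b : Fin 4 × Fin 4 × Fin 4 × Fin 4 × Fin 4) (j : Fin 24) : ℕ :=
  b.1 * gen 1 j + b.2.1 * gen 4 j + b.2.2.1 * gen 9 j + b.2.2.2.1 * gen 10 j +
    b.2.2.2.2 * gen 11 j

theorem word_emb (b : Fin 4 × Fin 4 × Fin 4 × Fin 4 × Fin 4) :
    (word fun i => ((emb b i : ℕ) : ZMod 8)) = fun j => (coords b j : ZMod 8) := by
  funext j
  have hs (f : Fin 12 → ZMod 8) : ∑ i, f i = f 0 + f 1 + f 2 + f 3 + f 4 + f 5 + f 6 + f 7 +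
      f 8 + f 9 + f 10 + f 11 := by
    simp only [Fin.sum_univ_castSucc, Fin.sum_univ_zero, zero_add]
    rfl
  have e0 : emb b 0 = 0 := rfl
  have e1 : emb b 1 = b.1 := rfl
  have e2 : emb b 2 = 0 := rfl
  have e3 : emb b 3 = 0 := rfl
  have e4 : emb b 4 = b.2.1 := rfl
  have e5 : emb b 5 = 0 := rfl
  have e6 : emb b 6 = 0 := rfl
  have e7 : emb b 7 = 0 := rfl
  have e8 : emb b 8 = 0 := rfl
  have e9 : emb b 9 = b.2.2.1 := rfl
  have e10 : emb b 10 = b.2.2.2.1 := rfl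
  have e11 : emb b 11 = b.2.2.2.2 := rfl
  rw [word, hs, e0, e1, e2, e3, e4, e5, e6, e7, e8, e9, e10, e11, coords]
  push_cast
  simp only [Fin.val_zero, Nat.cast_zero, zero_mul, add_zero, zero_add]

/-- The code of the summand of `charSum (bits base)` at `emb b`. -/
def codeSum (b : Fin 4 × Fin 4 × Fin 4 × Fin 4 × Fin 4) : ℕ :=
  ∑ j, code (coords b j) (base.testBit j)

theorem codeSum_eq_total (b : Fin 4 × Fin 4 × Fin 4 × Fin 4 × Fin 4) :
    codeSum b = total b.1 b.2.1 b.2.2.1 b.2.2.2.1 b.2.2.2.2 cols := by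
  rw [total_eq_sum, cols_spec, List.map_ofFn, List.sum_ofFn]
  rfl

/-- The codes of summands with a nonzero coefficient and odd coordinates that are not among the
keys. -/
def IsBad (S : ℕ) : Prop := (∀ k, S ≠ keys k) ∧ S % 32 ≠ 0 ∧ S < 33554432

theorem mark_eq (S : ℕ) : mark S = (∑ k : Fin 8, 2048 ^ (k : ℕ) * if S = keys k then 1 else 0) +
    2048 ^ 8 * if IsBad S then 1 else 0 := by
  have hb (a b : ℕ) : Nat.beq a b = decide (a = b) := by
    rw [Bool.eq_iff_iff, Nat.beq_eq, decide_eq_true_iff]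
  have hl (a b : ℕ) : Nat.ble a b = decide (a ≤ b) := by
    rw [Bool.eq_iff_iff, Nat.ble_eq, decide_eq_true_iff]
  have hk (k : Fin 8) : IsBad (keys k) ↔ False := by
    rw [iff_false]
    exact fun h => h.1 k rfl
  by_cases h : ∃ k, S = keys k
  · obtain ⟨k, rfl⟩ := h
    simp only [hk, if_false, mul_zero, add_zero]
    fin_cases k <;> decide +kernel
  · push Not at h
    have hbad : IsBad S ↔ ¬ (S % 32 = 0 ∨ 33554432 ≤ S) := by
      rw [IsBad]
      push Not
      exact and_iff_right h
    have h0 : S ≠ 204872 := h 0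
    have h1 : S ≠ 1253448 := h 1
    have h2 : S ≠ 139400 := h 2
    have h3 : S ≠ 1187976 := h 3
    have h4 : S ≠ 73928 := h 4
    have h5 : S ≠ 1122504 := h 5
    have h6 : S ≠ 8208 := h 6
    have h7 : S ≠ 1056784 := h 7
    simp only [mark, hb, hl, h0, h1, h2, h3, h4, h5, h6, h7, decide_false, cond_false, h,
      if_false, mul_zero, Finset.sum_const_zero, zero_add, hbad, ← Bool.decide_or]
    by_cases hq : S % 32 = 0 ∨ 33554432 ≤ S
    · simp [hq]
    · simp [hq]

/-- The number of `b` with a given key. -/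
def keyCount : Fin 8 → ℕ := ![48, 64, 128, 96, 48, 64, 16, 16]

theorem codeSum_count : (∀ b, ¬ IsBad (codeSum b)) ∧
    ∀ k, (∑ b, if codeSum b = keys k then 1 else 0) = keyCount k := by
  have h4 (p : ℕ → ℕ) : ∑ x : Fin 4, p x = sum4 p := Fin.sum_univ_four _
  have h := Nat.eq_of_beq_eq_true mark_total
  have hm : ∑ b, mark (codeSum b) = 2419034537538235075264560 := by
    rw [← h]
    simp only [codeSum_eq_total, Fintype.sum_prod_type]
    simp only [← h4]
  have hle (p : Fin 4 × Fin 4 × Fin 4 × Fin 4 × Fin 4 → Prop) [DecidablePred p] :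
      (∑ b, if p b then 1 else 0) ≤ 1024 := by
    rw [Finset.sum_boole]
    exact (Finset.card_le_univ _).trans (by simp)
  simp only [mark_eq, Finset.sum_add_distrib, Fin.sum_univ_eight, ← Finset.mul_sum] at hm
  have l0 := hle fun b => codeSum b = keys 0
  have l1 := hle fun b => codeSum b = keys 1
  have l2 := hle fun b => codeSum b = keys 2
  have l3 := hle fun b => codeSum b = keys 3
  have l4 := hle fun b => codeSum b = keys 4
  have l5 := hle fun b => codeSum b = keys 5
  have l6 := hle fun b => codeSum b = keys 6
  have l7 := hle fun b => codeSum b = keys 7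
  have l8 := hle fun b => IsBad (codeSum b)
  have hk (k : Fin 8) (n : ℕ) (hn : keyCount k = n)
      (h : (∑ b, if codeSum b = keys k then 1 else 0) = n) :
      (∑ b, if codeSum b = keys k then 1 else 0) = keyCount k := h.trans hn.symm
  generalize hn0 : (∑ b, if codeSum b = keys 0 then 1 else 0) = n0 at hm l0
  generalize hn1 : (∑ b, if codeSum b = keys 1 then 1 else 0) = n1 at hm l1
  generalize hn2 : (∑ b, if codeSum b = keys 2 then 1 else 0) = n2 at hm l2
  generalize hn3 : (∑ b, if codeSum b = keys 3 then 1 else 0) = n3 at hm l3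
  generalize hn4 : (∑ b, if codeSum b = keys 4 then 1 else 0) = n4 at hm l4
  generalize hn5 : (∑ b, if codeSum b = keys 5 then 1 else 0) = n5 at hm l5
  generalize hn6 : (∑ b, if codeSum b = keys 6 then 1 else 0) = n6 at hm l6
  generalize hn7 : (∑ b, if codeSum b = keys 7 then 1 else 0) = n7 at hm l7
  generalize hn8 : (∑ b, if IsBad (codeSum b) then 1 else 0) = n8 at hm l8
  simp only [pow_zero, one_mul, pow_one,
    Fin.isValue, Fin.coe_ofNat_eq_mod, Nat.reduceMod, Nat.reducePow] at hm
  obtain ⟨rfl, rfl, rfl, rfl, rfl, rfl, rfl, rfl, rfl⟩ : n0 = 48 ∧ n1 = 64 ∧ n2 = 128 ∧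
      n3 = 96 ∧ n4 = 48 ∧ n5 = 64 ∧ n6 = 16 ∧ n7 = 16 ∧ n8 = 0 := by omega
  refine ⟨fun b hb => ?_, fun k => ?_⟩
  · have := Finset.sum_eq_zero_iff.1 hn8 b (Finset.mem_univ _)
    rw [if_pos hb] at this
    exact one_ne_zero this
  · fin_cases k
    · exact hk 0 48 rfl hn0
    · exact hk 1 64 rfl hn1
    · exact hk 2 128 rfl hn2
    · exact hk 3 96 rfl hn3
    · exact hk 4 48 rfl hn4
    · exact hk 5 64 rfl hn5
    · exact hk 6 16 rfl hn6
    · exact hk 7 16 rfl hn7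

/-- The monomial belonging to a key. -/
def keyMonomial : Fin 8 → MvPolynomial (Fin 4) ℚ :=
  ![monomial (expo 8 2 8 6) 1, monomial (expo 8 2 8 6) (-1),
    monomial (expo 8 4 8 4) 1, monomial (expo 8 4 8 4) (-1),
    monomial (expo 8 6 8 2) 1, monomial (expo 8 6 8 2) (-1),
    monomial (expo 16 0 8 0) 1, monomial (expo 16 0 8 0) (-1)]

theorem keys_injective : Function.Injective keys := by
  decide +kernel

theorem keys_facts : ∀ k, keys k % 32 ≠ 0 ∧ keys k < 33554432 := by
  decide +kernel

theorem divPart_term_emb (b : Fin 4 × Fin 4 × Fin 4 × Fin 4 × Fin 4) :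
    divPart (term (word fun i => ((emb b i : ℕ) : ZMod 8)) (bits base)) 0 2 =
      ∑ k, if codeSum b = keys k then keyMonomial k else 0 := by
  rw [word_emb]
  obtain ⟨n0, n1, n2, n3, s, z, l0, l1, l2, l3, ls, hS, hterm⟩ :=
    term_of_code (coords b) (fun j => base.testBit j)
  change codeSum b = _ at hS
  change term _ (bits base) = _ at hterm
  rw [hterm, divPart_monomial]
  have hx0 : expo n0 n1 n2 n3 0 = n0 := by simp [expo]
  have hx2 : expo n0 n1 n2 n3 2 = n2 := by simp [expo]
  rw [hx0, hx2]
  by_cases hk : ∃ k, codeSum b = keys k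
  · obtain ⟨k, hk⟩ := hk
    rw [Finset.sum_eq_single k (fun l _ hl => if_neg fun h => hl
      (keys_injective (h.symm.trans hk))) (fun h => absurd (Finset.mem_univ _) h), if_pos hk]
    rw [hk] at hS
    have key (a0 a1 a2 a3 t : ℕ) (h0 : n0 = a0) (h1 : n1 = a1) (h2 : n2 = a2) (h3 : n3 = a3)
        (ht : s = t) (hz : z = 0) (ha0 : a0 ≠ 0) (ha2 : a2 ≠ 0) :
        (if n0 ≠ 0 ∧ n2 ≠ 0 then
          monomial (expo n0 n1 n2 n3) (if z = 0 then (-1 : ℚ) ^ s else 0) else 0) =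
        monomial (expo a0 a1 a2 a3) ((-1 : ℚ) ^ t) := by
      rw [h0, h1, h2, h3, ht, if_pos hz, if_pos ⟨ha0, ha2⟩]
    fin_cases k
    · change 204872 = _ at hS
      rw [key 8 2 8 6 0 (by omega) (by omega) (by omega) (by omega) (by omega) (by omega)
        (by norm_num) (by norm_num), pow_zero]
      rfl
    · change 1253448 = _ at hS
      rw [key 8 2 8 6 1 (by omega) (by omega) (by omega) (by omega) (by omega) (by omega)
        (by norm_num) (by norm_num), pow_one]
      rfl
    · change 139400 = _ at hS
      rw [key 8 4 8 4 0 (by omega) (by omega) (by omega) (by omega) (by omega) (by omega)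
        (by norm_num) (by norm_num), pow_zero]
      rfl
    · change 1187976 = _ at hS
      rw [key 8 4 8 4 1 (by omega) (by omega) (by omega) (by omega) (by omega) (by omega)
        (by norm_num) (by norm_num), pow_one]
      rfl
    · change 73928 = _ at hS
      rw [key 8 6 8 2 0 (by omega) (by omega) (by omega) (by omega) (by omega) (by omega)
        (by norm_num) (by norm_num), pow_zero]
      rfl
    · change 1122504 = _ at hS
      rw [key 8 6 8 2 1 (by omega) (by omega) (by omega) (by omega) (by omega) (by omega)
        (by norm_num) (by norm_num), pow_one]
      rfl
    · change 8208 = _ at hS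
      rw [key 16 0 8 0 0 (by omega) (by omega) (by omega) (by omega) (by omega) (by omega)
        (by norm_num) (by norm_num), pow_zero]
      rfl
    · change 1056784 = _ at hS
      rw [key 16 0 8 0 1 (by omega) (by omega) (by omega) (by omega) (by omega) (by omega)
        (by norm_num) (by norm_num), pow_one]
      rfl
  · push Not at hk
    rw [Finset.sum_eq_zero fun k _ => if_neg (hk k)]
    have hb := codeSum_count.1 b
    have hb' : codeSum b % 32 = 0 ∨ 33554432 ≤ codeSum b := by
      by_contra! hne
      exact hb ⟨hk, hne.1, hne.2⟩
    split_ifs with h02 hz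
    · exfalso
      omega
    · rw [monomial_zero]
    · rfl

theorem expo_monomial (a b c d : ℕ) : (monomial (expo a b c d) (1 : ℚ)) =
    X 0 ^ a * X 1 ^ b * X 2 ^ c * X 3 ^ d := by
  simp only [X_pow_eq_monomial, monomial_mul, expo, one_mul]

theorem base_orthogonal : ∀ i, ∑ j, bits base j * (gen i j : ZMod 2) = 0 := by
  decide +kernel

theorem good_base : Good (bits base) := by
  refine ⟨?_, divPart_charSum_compl_base⟩
  rw [charSum_eq_sum_mod_four _ base_orthogonal, divPart_smul, divPart_sum, divPart_sum_emb]
  refine congrArg ((2 : ℚ) ^ 12 • ·) ?_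
  simp only [divPart_term_emb]
  rw [Finset.sum_comm]
  have h (k : Fin 8) : (∑ b, if codeSum b = keys k then keyMonomial k else 0) =
      keyCount k • keyMonomial k := by
    rw [← codeSum_count.2 k, Finset.sum_smul]
    exact Finset.sum_congr rfl fun b _ => by split_ifs <;> simp
  simp only [h, Fin.sum_univ_eight]
  have hn (a b c d : ℕ) : (monomial (expo a b c d) (-1 : ℚ)) =
    -(X 0 ^ a * X 1 ^ b * X 2 ^ c * X 3 ^ d) := by
    rw [← expo_monomial, ← map_neg]
  change 48 • monomial (expo 8 2 8 6) 1 + 64 • monomial (expo 8 2 8 6) (-1) +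
    128 • monomial (expo 8 4 8 4) 1 + 96 • monomial (expo 8 4 8 4) (-1) +
    48 • monomial (expo 8 6 8 2) 1 + 64 • monomial (expo 8 6 8 2) (-1) +
    16 • monomial (expo 16 0 8 0) 1 + 16 • monomial (expo 16 0 8 0) (-1) = octadPoly
  rw [octadPoly]
  simp only [hn, expo_monomial]
  ring

/-! ### The sum over the Golay code -/

/-- The total over all `T` of the relevant parts of the sums `charSum T`. -/
theorem sum_divPart_charSum :
    ∑ T : Fin 24 → ZMod 2, divPart (charSum T) 0 2 = (2 : ℚ) ^ 12 • (759 : ℕ) • octadPoly := by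
  have h1 : ∑ τ : Fin 12 → ZMod 2, divPart (charSum (golay τ)) 0 2 =
      ∑ T : Fin 24 → ZMod 2, divPart (charSum T) 0 2 := by
    refine Fintype.sum_of_injective golay golay_injective _ _ (fun T hT => ?_) fun τ => rfl
    by_cases h : ∀ i, ∑ j, T j * (gen i j : ZMod 2) = 0
    · exact absurd ⟨_, (eq_golay_of_orthogonal T h).symm⟩ hT
    · push Not at h
      obtain ⟨i, hi⟩ := h
      rw [charSum_eq_zero T i hi]
      simp [divPart]
  have h2 (τ : Fin 12 → ZMod 2) : divPart (charSum (golay τ)) 0 2 =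
      (if wt (golay τ) = 8 then 1 else 0 : ℕ) • (2 : ℚ) ^ 12 • octadPoly := by
    split_ifs with h8
    · rw [one_smul]
      exact (good_octad good_base τ h8).1
    · rw [zero_smul]
      rcases golay_weight τ with h | h | h | h | h
      · rw [h]
        exact divPart_charSum_zero
      · exact absurd h h8
      · exact divPart_charSum_dodecad τ h
      · exact divPart_charSum_sixteen good_base τ h
      · exact divPart_charSum_full _ h
  rw [← h1, Finset.sum_congr rfl fun τ _ => h2 τ, ← Finset.sum_smul, octad_count, smul_comm]

/-! ### Uniqueness of the lifted polynomials -/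

instance : Nontrivial (ZMod 8) := ⟨0, 1, by decide⟩

/-- The lift to `ℤ/8ℤ` of one of the two quadratic residue factors, evaluated at `x`. -/
def lift₁ {R : Type*} [CommRing R] (x : R) : R :=
  7 + 6 * x + x ^ 2 + 4 * x ^ 3 + 5 * x ^ 4 + 5 * x ^ 5 + x ^ 6 + 6 * x ^ 7 + 4 * x ^ 8 +
    4 * x ^ 9 + 7 * x ^ 10 + x ^ 11

/-- The lift to `ℤ/8ℤ` of the other quadratic residue factor, evaluated at `x`. -/
def lift₂ {R : Type*} [CommRing R] (x : R) : R :=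
  7 + x + 4 * x ^ 2 + 4 * x ^ 3 + 2 * x ^ 4 + 7 * x ^ 5 + 3 * x ^ 6 + 3 * x ^ 7 + 4 * x ^ 8 +
    7 * x ^ 9 + 2 * x ^ 10 + x ^ 11

theorem lift_factorization {R : Type*} [CommRing R] (h8 : (8 : R) = 0) (x : R) :
    (x - 1) * lift₁ x * lift₂ x = x ^ 23 - 1 := by
  unfold lift₁ lift₂
  linear_combination (-6 + x ^ 2 - 5 * x ^ 3 - 5 * x ^ 5 + x ^ 6 - 3 * x ^ 7 - x ^ 8 - 6 * x ^ 9
    - 3 * x ^ 10 + 10 * x ^ 11 - 4 * x ^ 12 + 2 * x ^ 13 + 3 * x ^ 14 + x ^ 15 + 2 * x ^ 16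
    + 3 * x ^ 17 + x ^ 18 + x ^ 19 + 5 * x ^ 20 + 2 * x ^ 21 + x ^ 22) * h8

theorem lift₁_bezout {R : Type*} [CommRing R] (h2 : (2 : R) = 0) (x : R) :
    (x ^ 5 + x ^ 9 + x ^ 11) * lift₁ x +
      (1 + x ^ 2 + x ^ 4 + x ^ 6 + x ^ 10) * ((x - 1) * lift₂ x) = 1 := by
  unfold lift₁ lift₂
  linear_combination (-4 + 3 * x - 5 * x ^ 2 + 3 * x ^ 3 - 4 * x ^ 4 + 4 * x ^ 5 + x ^ 6 + x ^ 7
    + 3 * x ^ 8 + 2 * x ^ 9 + 7 * x ^ 10 + 4 * x ^ 11 + 11 * x ^ 12 + 4 * x ^ 13 + 10 * x ^ 14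
    + 3 * x ^ 15 + 11 * x ^ 16 + 3 * x ^ 17 + 5 * x ^ 18 + 4 * x ^ 19 + 5 * x ^ 20 + 4 * x ^ 21
    + x ^ 22) * h2

theorem lift₂_bezout {R : Type*} [CommRing R] (h2 : (2 : R) = 0) (x : R) :
    (x + x ^ 3 + x ^ 7) * lift₂ x + (1 + x ^ 6) * ((x - 1) * lift₁ x) = 1 := by
  unfold lift₁ lift₂
  linear_combination (-4 + 4 * x + 3 * x ^ 2 + 4 * x ^ 3 + 2 * x ^ 4 + 3 * x ^ 5 + 4 * x ^ 6
    + 4 * x ^ 7 + 9 * x ^ 8 + 4 * x ^ 9 + 5 * x ^ 10 + 7 * x ^ 11 + 10 * x ^ 12 + 3 * x ^ 14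
    + 2 * x ^ 15 + 2 * x ^ 16 + 4 * x ^ 17 + x ^ 18) * h2

theorem lift₁_degree {R : Type*} [CommRing R] [Nontrivial R] :
    (lift₁ (Polynomial.X : Polynomial R)).Monic ∧
      (lift₁ (Polynomial.X : Polynomial R)).natDegree = 11 := by
  unfold lift₁
  constructor
  · monicity!
  · compute_degree!

theorem lift₂_degree {R : Type*} [CommRing R] [Nontrivial R] :
    (lift₂ (Polynomial.X : Polynomial R)).Monic ∧
      (lift₂ (Polynomial.X : Polynomial R)).natDegree = 11 := by
  unfold lift₂
  constructor
  · monicity!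
  · compute_degree!

theorem eight_eq_zero : (8 : Polynomial (ZMod 8)) = 0 := by
  have : ((8 : ℕ) : Polynomial (ZMod 8)) = 0 := CharP.cast_eq_zero _ 8
  exact_mod_cast this

theorem two_eq_zero : (2 : Polynomial (ZMod 2)) = 0 := by
  have : ((2 : ℕ) : Polynomial (ZMod 2)) = 0 := CharP.cast_eq_zero _ 2
  exact_mod_cast this

/-- Both irreducible factors are written as the reductions of their lifts. -/
theorem qrFactor_eq (g : Polynomial (ZMod 2)) (hg : IsQRFactor 2 g) :
    g = lift₁ Polynomial.X ∨ g = lift₂ Polynomial.X := by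
  obtain ⟨hm, hd, hi, hdvd⟩ := hg
  have h8 : (8 : Polynomial (ZMod 2)) = 0 := by
    linear_combination 4 * two_eq_zero
  rw [← lift_factorization h8, mul_assoc] at hdvd
  obtain ⟨m₁, d₁⟩ := lift₁_degree (R := ZMod 2)
  obtain ⟨m₂, d₂⟩ := lift₂_degree (R := ZMod 2)
  rcases hi.prime.dvd_or_dvd hdvd with h | h
  · exfalso
    have hX : (Polynomial.X - 1 : Polynomial (ZMod 2)) ≠ 0 := Polynomial.X_sub_C_ne_zero 1
    have h1 := Polynomial.natDegree_le_of_dvd h hX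
    have h2 : (Polynomial.X - 1 : Polynomial (ZMod 2)).natDegree = 1 :=
      Polynomial.natDegree_X_sub_C 1
    omega
  · rcases hi.prime.dvd_or_dvd h with h | h
    · left
      exact (Polynomial.eq_of_monic_of_dvd_of_natDegree_le hm m₁ h (by omega)).symm
    · right
      exact (Polynomial.eq_of_monic_of_dvd_of_natDegree_le hm m₂ h (by omega)).symm

theorem isNilpotent_of_map_eq_zero (h28 : 2 ∣ 8) (E : Polynomial (ZMod 8))
    (hE : E.map (ZMod.castHom h28 (ZMod 2)) = 0) : IsNilpotent E := by
  rw [Polynomial.isNilpotent_iff]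
  intro i
  have h := congrArg (fun p => Polynomial.coeff p i) hE
  simp only [Polynomial.coeff_map, Polynomial.coeff_zero] at h
  refine ⟨3, ?_⟩
  generalize E.coeff i = a at h
  revert a
  have : ∀ a : ZMod 8, (a.cast : ZMod 2) = 0 → a ^ 3 = 0 := by decide +kernel
  exact this

/-- Uniqueness of the Hensel lift: `U G + V H ≡ 1` modulo `2` makes a lift `g3` of `G`
modulo `2` coprime to `H`, whence `g3 ∣ G`. -/
theorem lift_unique (h28 : 2 ∣ 8) (G H U V g3 : Polynomial (ZMod 8))
    (hGH : G * H = Polynomial.X ^ 23 - 1) (hG : G.Monic) (hGd : G.natDegree = 11)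
    (hm : g3.Monic) (hd : g3.natDegree = 11) (hdvd : g3 ∣ Polynomial.X ^ 23 - 1)
    (hUV : (U * g3 + V * H - 1).map (ZMod.castHom h28 (ZMod 2)) = 0) : g3 = G := by
  have hu : IsUnit (U * g3 + V * H) := by
    have := (isNilpotent_of_map_eq_zero h28 _ hUV).isUnit_one_add
    rwa [add_sub_cancel] at this
  have hco : IsCoprime g3 H := by
    obtain ⟨w, hw⟩ := hu.exists_right_inv
    exact ⟨w * U, w * V, by linear_combination hw⟩
  rw [← hGH] at hdvd
  exact (Polynomial.eq_of_monic_of_dvd_of_natDegree_le hm hG (hco.dvd_of_dvd_mul_right hdvd)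
    (by omega)).symm

theorem g3_eq (h28 : 2 ∣ 8) (g : Polynomial (ZMod 2)) (hg : IsQRFactor 2 g)
    (g3 : Polynomial (ZMod 8)) (hm : g3.Monic) (hd : g3.natDegree = 11)
    (hdvd : g3 ∣ Polynomial.X ^ 23 - 1) (hmap : g3.map (ZMod.castHom h28 (ZMod 2)) = g) :
    g3 = lift₁ Polynomial.X ∨ g3 = lift₂ Polynomial.X := by
  have hf := lift_factorization eight_eq_zero Polynomial.X
  have m₁ : (lift₁ (Polynomial.X : Polynomial (ZMod 8))).map (ZMod.castHom h28 (ZMod 2)) =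
      lift₁ Polynomial.X := by simp [lift₁]
  have m₂ : (lift₂ (Polynomial.X : Polynomial (ZMod 8))).map (ZMod.castHom h28 (ZMod 2)) =
      lift₂ Polynomial.X := by simp [lift₂]
  rcases qrFactor_eq g hg with h | h
  · left
    refine lift_unique h28 (lift₁ Polynomial.X) ((Polynomial.X - 1) * lift₂ Polynomial.X)
      (Polynomial.X ^ 5 + Polynomial.X ^ 9 + Polynomial.X ^ 11)
      (1 + Polynomial.X ^ 2 + Polynomial.X ^ 4 + Polynomial.X ^ 6 + Polynomial.X ^ 10) g3
      (by rw [← hf]; ring) lift₁_degree.1 lift₁_degree.2 hm hd hdvd ?_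
    simp only [Polynomial.map_sub, Polynomial.map_add, Polynomial.map_mul, Polynomial.map_pow,
      Polynomial.map_X, Polynomial.map_one, hmap, m₂, h]
    rw [lift₁_bezout two_eq_zero, sub_self]
  · right
    refine lift_unique h28 (lift₂ Polynomial.X) ((Polynomial.X - 1) * lift₁ Polynomial.X)
      (Polynomial.X + Polynomial.X ^ 3 + Polynomial.X ^ 7) (1 + Polynomial.X ^ 6) g3
      (by rw [← hf]; ring) lift₂_degree.1 lift₂_degree.2 hm hd hdvd ?_
    simp only [Polynomial.map_sub, Polynomial.map_add, Polynomial.map_mul, Polynomial.map_pow,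
      Polynomial.map_X, Polynomial.map_one, hmap, m₁, h]
    rw [lift₂_bezout two_eq_zero, sub_self]

/-! ### Generator matrices of the lifted codes -/

/-- The coefficients of `lift₁`. -/
def coeffs₁ : List ℕ := [7, 6, 1, 4, 5, 5, 1, 6, 4, 4, 7, 1]

/-- The coefficients of `lift₂`. -/
def coeffs₂ : List ℕ := [7, 1, 4, 4, 2, 7, 3, 3, 4, 7, 2, 1]

theorem coeff_of_list (l : List ℕ) (hl : l.length = 12) (n : ℕ) :
    (∑ i ∈ Finset.range 12, Polynomial.C ((l.getD i 0 : ℕ) : ZMod 8) * Polynomial.X ^ i).coeff n =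
      ((l.getD n 0 : ℕ) : ZMod 8) := by
  simp only [Polynomial.finsetSum_coeff, Polynomial.coeff_C_mul_X_pow]
  rw [Finset.sum_ite_eq]
  split_ifs with h
  · rfl
  · rw [Finset.mem_range, not_lt] at h
    rw [List.getD_eq_default _ _ (by omega), Nat.cast_zero]

theorem coeff_lift₁ (n : ℕ) : (lift₁ (Polynomial.X : Polynomial (ZMod 8))).coeff n =
    ((coeffs₁.getD n 0 : ℕ) : ZMod 8) := by
  rw [← coeff_of_list coeffs₁ rfl]
  refine congrArg (fun p => Polynomial.coeff p n) ?_
  simp [Finset.sum_range_succ, coeffs₁, lift₁]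

theorem coeff_lift₂ (n : ℕ) : (lift₂ (Polynomial.X : Polynomial (ZMod 8))).coeff n =
    ((coeffs₂.getD n 0 : ℕ) : ZMod 8) := by
  rw [← coeff_of_list coeffs₂ rfl]
  refine congrArg (fun p => Polynomial.coeff p n) ?_
  simp [Finset.sum_range_succ, coeffs₂, lift₂]

/-- The generator matrix of the extended cyclic code generated by the polynomial with
coefficients `l`. -/
def cyc (l : List ℕ) (i : Fin 12) (j : Fin 24) : ℕ :=
  if j.val = 23 then 7 * l.sum else if i.val ≤ j.val then l.getD (j.val - i.val) 0 else 0

theorem cyclic_iff (l : List ℕ) (G H : Polynomial (ZMod 8))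
    (hGH : G * H = Polynomial.X ^ 23 - 1) (hG : G.Monic) (hH : H.Monic)
    (hGd : G.natDegree = 11) (hHd : H.natDegree = 12)
    (hcoeff : ∀ n, G.coeff n = ((l.getD n 0 : ℕ) : ZMod 8)) (c : Fin 23 → ZMod 8) :
    (∃ f : Polynomial (ZMod 8), ∀ j : Fin 23,
        c j = ((f * G) %ₘ (Polynomial.X ^ 23 - 1)).coeff (j : ℕ)) ↔
      ∃ v : Fin 12 → ZMod 8, ∀ j, c j = ∑ i, v i * (cyc l i (Fin.castSucc j) : ZMod 8) := by
  have hX : (Polynomial.X ^ 23 - 1 : Polynomial (ZMod 8)).Monic := by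
    rw [← hGH]
    exact hG.mul hH
  have hXd : (Polynomial.X ^ 23 - 1 : Polynomial (ZMod 8)).natDegree = 23 := by
    rw [← hGH, hG.natDegree_mul hH, hGd, hHd]
  -- a product `r G` with `deg r < 12` is already reduced, and its coefficients are explicit
  have hred (f : Polynomial (ZMod 8)) :
      (f * G) %ₘ (Polynomial.X ^ 23 - 1) = G * (f %ₘ H) := by
    refine (Polynomial.div_modByMonic_unique (f /ₘ H) _ hX ⟨?_, ?_⟩).2
    · rw [← hGH]
      linear_combination G * Polynomial.modByMonic_add_div f H
    · rw [Polynomial.degree_eq_natDegree hX.ne_zero, hXd]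
      have h1 := Polynomial.degree_modByMonic_lt f hH
      rw [Polynomial.degree_eq_natDegree hH.ne_zero, hHd] at h1
      refine lt_of_le_of_lt (Polynomial.degree_mul_le _ _) ?_
      rw [Polynomial.degree_eq_natDegree hG.ne_zero, hGd]
      exact WithBot.add_lt_add_left (by simp) h1
  have hco (v : Fin 12 → ZMod 8) (j : Fin 23) :
      (G * ∑ i : Fin 12, Polynomial.C (v i) * Polynomial.X ^ (i : ℕ)).coeff j =
        ∑ i, v i * (cyc l i (Fin.castSucc j) : ZMod 8) := by
    rw [Finset.mul_sum, Polynomial.finsetSum_coeff]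
    refine Finset.sum_congr rfl fun i _ => ?_
    rw [mul_left_comm, Polynomial.coeff_C_mul, Polynomial.coeff_mul_X_pow', hcoeff, cyc,
      if_neg (show ¬ (Fin.castSucc j).val = 23 from j.isLt.ne)]
    simp only [Fin.val_castSucc]
    split_ifs <;> simp
  have hsum (v : Fin 12 → ZMod 8) :
      (∑ i : Fin 12, Polynomial.C (v i) * Polynomial.X ^ (i : ℕ)).degree < H.degree := by
    rw [Polynomial.degree_eq_natDegree hH.ne_zero, hHd]
    exact Polynomial.degree_sum_fin_lt v
  constructor
  · rintro ⟨f, hf⟩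
    refine ⟨fun i => (f %ₘ H).coeff i, fun j => ?_⟩
    rw [hf, hred, ← hco]
    have hlt : (f %ₘ H).natDegree < 12 := by
      have := Polynomial.natDegree_modByMonic_lt f hH (by
        intro h
        rw [h] at hHd
        simp at hHd)
      omega
    rw [← Polynomial.as_sum_range_C_mul_X_pow' _ hlt |>.trans (Finset.sum_range _)]
  · rintro ⟨v, hv⟩
    refine ⟨∑ i : Fin 12, Polynomial.C (v i) * Polynomial.X ^ (i : ℕ), fun j => ?_⟩
    rw [hred, (Polynomial.modByMonic_eq_self_iff hH).2 (hsum v), hco, hv]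

/-- Membership in the extended code in terms of the explicit generator matrix. -/
theorem extended_iff (l : List ℕ)
    (hl : ∀ i, (cyc l i (Fin.last 23) : ZMod 8) =
      -∑ j : Fin 23, (cyc l i (Fin.castSucc j) : ZMod 8)) (c : Fin 24 → ZMod 8) :
    ((∃ v : Fin 12 → ZMod 8, ∀ j, c (Fin.castSucc j) =
        ∑ i, v i * (cyc l i (Fin.castSucc j) : ZMod 8)) ∧
      c (Fin.last 23) = -∑ j : Fin 23, c (Fin.castSucc j)) ↔
    ∃ v : Fin 12 → ZMod 8, ∀ j, c j = ∑ i, v i * (cyc l i j : ZMod 8) := by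
  have h (v : Fin 12 → ZMod 8) : ∑ i, v i * (cyc l i (Fin.last 23) : ZMod 8) =
      -∑ j : Fin 23, ∑ i, v i * (cyc l i (Fin.castSucc j) : ZMod 8) := by
    rw [Finset.sum_comm, ← Finset.sum_neg_distrib]
    refine Finset.sum_congr rfl fun i _ => ?_
    rw [hl, mul_neg, Finset.mul_sum]
  constructor
  · rintro ⟨⟨v, hv⟩, hlast⟩
    refine ⟨v, fun j => ?_⟩
    induction j using Fin.lastCases with
    | last => rw [hlast, h]; simp only [hv]
    | cast j => exact hv j
  · rintro ⟨v, hv⟩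
    refine ⟨⟨v, fun j => hv _⟩, ?_⟩
    rw [hv, h]
    simp only [hv]

/-- Two generator matrices that express each other span, up to the permutation `ρ`, the same
code. -/
theorem span_iff (l : List ℕ) (ρ : Equiv.Perm (Fin 24)) (B : Fin 12 → Fin 12 → ℕ)
    (hA : ∀ (i : Fin 12) (j : Fin 24),
      (∑ k, cyc l i (ρ (info k)) * gen k j) % 8 = cyc l i (ρ j) % 8)
    (hB : ∀ (i : Fin 12) (j : Fin 24), (∑ k, B i k * cyc l k (ρ j)) % 8 = gen i j % 8)
    (c : Fin 24 → ZMod 8) :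
    (∃ v : Fin 12 → ZMod 8, ∀ j, c j = ∑ i, v i * (cyc l i j : ZMod 8)) ↔
      ∃ u, word u ∘ ρ.symm = c := by
  have hcomb (M N : Fin 12 → Fin 24 → ℕ) (A : Fin 12 → Fin 12 → ℕ)
      (h : ∀ i j, (∑ k, A i k * M k j) % 8 = N i j % 8) (v : Fin 12 → ZMod 8) (j : Fin 24) :
      ∑ i, v i * (N i j : ZMod 8) = ∑ k, (∑ i, v i * (A i k : ZMod 8)) * (M k j : ZMod 8) := by
    have h' (i : Fin 12) : (N i j : ZMod 8) = ∑ k, (A i k : ZMod 8) * (M k j : ZMod 8) := by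
      have := (ZMod.natCast_eq_natCast_iff' _ _ 8).2 (h i j)
      rw [← this]
      push_cast
      rfl
    simp only [h', Finset.mul_sum, Finset.sum_mul, mul_assoc]
    exact Finset.sum_comm
  constructor
  · rintro ⟨v, hv⟩
    refine ⟨fun k => ∑ i, v i * (cyc l i (ρ (info k)) : ZMod 8), funext fun j => ?_⟩
    have := hcomb gen (fun i j => cyc l i (ρ j)) (fun i k => cyc l i (ρ (info k))) hA v (ρ.symm j)
    simp only [Equiv.apply_symm_apply] at this
    rw [hv, this]
    rfl
  · rintro ⟨u, rfl⟩
    refine ⟨fun k => ∑ i, u i * (B i k : ZMod 8), fun j => ?_⟩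
    have := hcomb (fun i j => cyc l i (ρ j)) gen B hB u (ρ.symm j)
    simp only [Equiv.apply_symm_apply] at this
    exact this

/-- The permutation `j ↦ 11 - j` of `ℤ/23ℤ`, fixing the extended coordinate. -/
def reflection : Equiv.Perm (Fin 24) where
  toFun j := if j.val = 23 then 23 else Fin.ofNat 24 ((34 - j.val) % 23)
  invFun j := if j.val = 23 then 23 else Fin.ofNat 24 ((34 - j.val) % 23)
  left_inv := by decide +kernel
  right_inv := by decide +kernel

theorem span₁ (c : Fin 24 → ZMod 8) :
    (∃ v : Fin 12 → ZMod 8, ∀ j, c j = ∑ i, v i * (cyc coeffs₁ i j : ZMod 8)) ↔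
      ∃ u, word u ∘ (Equiv.refl (Fin 24)).symm = c := by
  -- the second matrix is read off from the power series inverse of `lift₁`
  refine span_iff coeffs₁ (Equiv.refl _)
    (fun i k => if i.val ≤ k.val then
      [7, 2, 3, 0, 6, 5, 4, 0, 1, 3, 3, 7].getD (k.val - i.val) 0 else 0) ?_ ?_ c <;>
    decide +kernel

theorem span₂ (c : Fin 24 → ZMod 8) :
    (∃ v : Fin 12 → ZMod 8, ∀ j, c j = ∑ i, v i * (cyc coeffs₂ i j : ZMod 8)) ↔
      ∃ u, word u ∘ reflection.symm = c := by
  -- the second matrix is read off from the power series inverse of `lift₂`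
  refine span_iff coeffs₂ reflection
    (fun i k => if 11 ≤ i.val + k.val then
      [7, 7, 3, 3, 1, 0, 4, 5, 6, 0, 3, 2].getD (i.val + k.val - 11) 0 else 0) ?_ ?_ c <;>
    decide +kernel

theorem cyc_last (l : List ℕ) (hl : ∀ i, (cyc l i (Fin.last 23) +
      ∑ j : Fin 23, cyc l i (Fin.castSucc j)) % 8 = 0) (i : Fin 12) :
    (cyc l i (Fin.last 23) : ZMod 8) = -∑ j : Fin 23, (cyc l i (Fin.castSucc j) : ZMod 8) := by
  have := (ZMod.natCast_eq_zero_iff _ 8).2 (Nat.dvd_of_mod_eq_zero (hl i))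
  push_cast at this
  exact eq_neg_of_add_eq_zero_left this

/-- Every lifted extended quadratic residue code is, up to a permutation of the coordinates, the
code spanned by `gen`. -/
theorem code_eq_words (h28 : 2 ∣ 8) (g : Polynomial (ZMod 2)) (hg : IsQRFactor 2 g)
    (g3 : Polynomial (ZMod 8)) (C3 : Submodule (ZMod 8) (Fin 24 → ZMod 8))
    (hC3 : IsLiftedQR h28 g g3 C3) :
    ∃ ρ : Equiv.Perm (Fin 24), ∀ c, c ∈ C3 ↔ ∃ u, word u ∘ ρ.symm = c := by
  obtain ⟨hm, hd, hdvd, hmap, hC⟩ := hC3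
  have hf := lift_factorization eight_eq_zero Polynomial.X
  obtain ⟨m₁, d₁⟩ := lift₁_degree (R := ZMod 8)
  obtain ⟨m₂, d₂⟩ := lift₂_degree (R := ZMod 8)
  have hX : (Polynomial.X - 1 : Polynomial (ZMod 8)).Monic := Polynomial.monic_X_sub_C 1
  have hXd : (Polynomial.X - 1 : Polynomial (ZMod 8)).natDegree = 1 :=
    Polynomial.natDegree_X_sub_C 1
  rcases g3_eq h28 g hg g3 hm hd hdvd hmap with rfl | rfl
  · refine ⟨Equiv.refl _, fun c => ?_⟩
    rw [hC, cyclic_iff coeffs₁ _ ((Polynomial.X - 1) * lift₂ Polynomial.X)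
      (by rw [← hf]; ring) m₁ (hX.mul m₂) d₁ (by rw [hX.natDegree_mul m₂, hXd, d₂]) coeff_lift₁
      fun j => c (Fin.castSucc j),
      extended_iff coeffs₁ (cyc_last coeffs₁ (by decide +kernel)), span₁]
  · refine ⟨reflection, fun c => ?_⟩
    rw [hC, cyclic_iff coeffs₂ _ ((Polynomial.X - 1) * lift₁ Polynomial.X)
      (by rw [← hf]; ring) m₂ (hX.mul m₁) d₂ (by rw [hX.natDegree_mul m₁, hXd, d₁]) coeff_lift₂
      fun j => c (Fin.castSucc j),
      extended_iff coeffs₂ (cyc_last coeffs₂ (by decide +kernel)), span₂]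

/-! ### Conclusion -/

theorem aeval_swe_eq (C3 : Submodule (ZMod 8) (Fin 24 → ZMod 8)) (ρ : Equiv.Perm (Fin 24))
    (hρ : ∀ c, c ∈ C3 ↔ ∃ u, word u ∘ ρ.symm = c) :
    aeval subst (swe 2 3 C3) = ∑ T : Fin 24 → ZMod 2, charSum T := by
  have hinj : Function.Injective fun u => word u ∘ ρ.symm := by
    intro u u' h
    funext k
    have := congrFun h (ρ (info k))
    simpa only [Function.comp_apply, Equiv.symm_apply_apply, word_info] using this
  rw [aeval_swe]
  simp only [charSum]
  rw [Finset.sum_comm]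
  refine (Fintype.sum_of_injective _ hinj _ _ (fun c hc => if_neg ?_) fun u => ?_).symm
  · rw [hρ]
    exact hc
  · rw [if_pos ((hρ _).2 ⟨u, rfl⟩)]
    refine Fintype.sum_equiv (ρ.arrowCongr (Equiv.refl _)) _ _ fun T => ?_
    exact (term_comp_perm ρ.symm (word u) T).symm

theorem main (h28 : 2 ∣ 8) (g : Polynomial (ZMod 2)) (hg : IsQRFactor 2 g)
    (g3 : Polynomial (ZMod 8)) (C3 : Submodule (ZMod 8) (Fin 24 → ZMod 8))
    (hC3 : IsLiftedQR h28 g g3 C3) :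
    divPart (((2 : ℚ) ^ 12)⁻¹ • aeval subst (swe 2 3 C3)) 0 2 = (759 : ℕ) • octadPoly := by
  obtain ⟨ρ, hρ⟩ := code_eq_words h28 g hg g3 C3 hC3
  rw [aeval_swe_eq C3 ρ hρ, divPart_smul, divPart_sum, sum_divPart_charSum,
    inv_smul_smul₀ (by norm_num)]

end QR24

/-- The partial weight enumerator `D_{2,1}` for the binary lifted QR codes of length 24. -/
theorem stmt_6 (g : Polynomial (ZMod 2)) (hg : IsQRFactor 2 g)
    (g3 : Polynomial (ZMod 8)) (C3 : Submodule (ZMod 8) (Fin 24 → ZMod 8))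
    (hC3 : IsLiftedQR (by norm_num : (2:ℕ) ∣ 8) g g3 C3) :
    divPart (((2:ℚ) ^ 12)⁻¹ •
        aeval (![X 0, X 1, X 3 - X 2, X 3 + X 2] : Fin 4 → MvPolynomial (Fin 4) ℚ) (swe 2 3 C3))
      0 2 =
      12144 * X 0 ^ 8 * X 2 ^ 8 *
        (-(X 1 ^ 2 * X 3 ^ 6) + 2 * X 1 ^ 4 * X 3 ^ 4 - X 1 ^ 6 * X 3 ^ 2) := by
  have h := QR24.main _ g hg g3 C3 hC3
  rw [QR24.subst] at h
  rw [h, QR24.octadPoly]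
  ring
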